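/- Suppose X'X/n → Q with Q symmetric positive definite and let β⁽ⁿ⁾ be a sequence of parameters such that either √n β₂⁽ⁿ⁾ → γ ∈ ℝ^{k₂} or ‖√n β₂⁽ⁿ⁾‖ → ∞. Then the finite-sample density f_{n,β⁽ⁿ⁾,σ} of √n(β̃ − β⁽ⁿ⁾) converges in L¹(ℝ^k) to f_∞, where f_∞ = f_{∞,γ} in the first case and f_∞ is the density of the N(0, σ²Q⁻¹) distribution in the second case; consequently the distribution of √n(β̃ − β⁽ⁿ⁾) under P_{n,β⁽ⁿ⁾,σ} converges to the corresponding limiting distribution in total variation distance. -/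

import Mathlib

open MeasureTheory Matrix Real Filter Topology ENNReal NNReal

noncomputable section

/-- Euclidean norm of a finite tuple. -/
def enorm2 {ι : Type*} [Fintype ι] (v : ι → ℝ) : ℝ := Real.sqrt (∑ i, v i ^ 2)

/-- The `N(0, σ² I)` distribution on `ι → ℝ`, given by its Lebesgue density. -/
def gaussPi (ι : Type*) [Fintype ι] (σ2 : ℝ) : Measure (ι → ℝ) :=
  volume.withDensity fun x => ENNReal.ofReal
    ((2 * π * σ2) ^ (-(Fintype.card ι : ℝ) / 2) * Real.exp (-(enorm2 x) ^ 2 / (2 * σ2)))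

/-- The Lebesgue density of the `N(0, σ² Q⁻¹)` distribution on `ι → ℝ`
(for `Q` symmetric positive definite). -/
def gaussCovDens {ι : Type*} [Fintype ι] [DecidableEq ι] (σ2 : ℝ) (Q : Matrix ι ι ℝ)
    (x : ι → ℝ) : ℝ :=
  (2 * π * σ2) ^ (-(Fintype.card ι : ℝ) / 2) * Real.sqrt Q.det *
    Real.exp (-(x ⬝ᵥ Q.mulVec x) / (2 * σ2))

/-- The `N(0, σ² Q⁻¹)` distribution on `ι → ℝ` (for `Q` symmetric positive definite),
given by its Lebesgue density. -/
def gaussCov {ι : Type*} [Fintype ι] [DecidableEq ι] (σ2 : ℝ) (Q : Matrix ι ι ℝ) :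
    Measure (ι → ℝ) :=
  volume.withDensity fun x => ENNReal.ofReal (gaussCovDens σ2 Q x)

open Classical in
/-- Symmetric positive semidefinite square root (junk value `0` off the psd cone). -/
def msqrt {ι : Type*} [Fintype ι] [DecidableEq ι] (A : Matrix ι ι ℝ) : Matrix ι ι ℝ :=
  if h : A.PosSemidef then
    (h.isHermitian.eigenvectorUnitary : Matrix ι ι ℝ) *
      Matrix.diagonal (Real.sqrt ∘ h.isHermitian.eigenvalues) *
      (star h.isHermitian.eigenvectorUnitary : Matrix ι ι ℝ)
  else 0

open Classical in
/-- Smallest eigenvalue of a symmetric matrix (junk value `0` otherwise). -/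
def lamMin {ι : Type*} [Fintype ι] [DecidableEq ι] (A : Matrix ι ι ℝ) : ℝ :=
  if h : A.IsHermitian then ⨅ i, h.eigenvalues i else 0

open Classical in
/-- Largest eigenvalue of a symmetric matrix (junk value `0` otherwise). -/
def lamMax {ι : Type*} [Fintype ι] [DecidableEq ι] (A : Matrix ι ι ℝ) : ℝ :=
  if h : A.IsHermitian then ⨆ i, h.eigenvalues i else 0

variable {n k₁ k₂ : ℕ}

/-- First block of columns of the design matrix. -/
def X1 (X : Matrix (Fin n) (Fin k₁ ⊕ Fin k₂) ℝ) : Matrix (Fin n) (Fin k₁) ℝ :=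
  X.submatrix id Sum.inl

/-- Second block of columns of the design matrix. -/
def X2 (X : Matrix (Fin n) (Fin k₁ ⊕ Fin k₂) ℝ) : Matrix (Fin n) (Fin k₂) ℝ :=
  X.submatrix id Sum.inr

/-- Unrestricted least squares estimator. -/
def betaU (X : Matrix (Fin n) (Fin k₁ ⊕ Fin k₂) ℝ) (Y : Fin n → ℝ) : (Fin k₁ ⊕ Fin k₂) → ℝ :=
  (Xᵀ * X)⁻¹.mulVec (Xᵀ.mulVec Y)

/-- Restricted least squares estimator. -/
def betaR (X : Matrix (Fin n) (Fin k₁ ⊕ Fin k₂) ℝ) (Y : Fin n → ℝ) : (Fin k₁ ⊕ Fin k₂) → ℝ :=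
  Sum.elim (((X1 X)ᵀ * X1 X)⁻¹.mulVec ((X1 X)ᵀ.mulVec Y)) (fun _ => 0)

/-- Risk estimate of the restricted model. -/
def rR (X : Matrix (Fin n) (Fin k₁ ⊕ Fin k₂) ℝ) (σ2 : ℝ) (Y : Fin n → ℝ) : ℝ :=
  Y ⬝ᵥ Y - betaR X Y ⬝ᵥ (Xᵀ * X).mulVec (betaR X Y) + σ2 * (2 * k₁ - n)

/-- Risk estimate of the unrestricted model. -/
def rU (X : Matrix (Fin n) (Fin k₁ ⊕ Fin k₂) ℝ) (σ2 : ℝ) (Y : Fin n → ℝ) : ℝ :=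
  Y ⬝ᵥ Y - betaU X Y ⬝ᵥ (Xᵀ * X).mulVec (betaU X Y) + σ2 * (2 * (k₁ + k₂) - n)

/-- The model averaging weight `λ̂`. -/
def lamHat (α σ2 : ℝ) (X : Matrix (Fin n) (Fin k₁ ⊕ Fin k₂) ℝ) (Y : Fin n → ℝ) : ℝ :=
  Real.exp (-(α * rR X σ2 Y) / σ2) /
    (Real.exp (-(α * rR X σ2 Y) / σ2) + Real.exp (-(α * rU X σ2 Y) / σ2))

/-- Leung and Barron's model averaging estimator `β̃`. -/
def mavg (α σ2 : ℝ) (X : Matrix (Fin n) (Fin k₁ ⊕ Fin k₂) ℝ) (Y : Fin n → ℝ) :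
    (Fin k₁ ⊕ Fin k₂) → ℝ :=
  lamHat α σ2 X Y • betaR X Y + (1 - lamHat α σ2 X Y) • betaU X Y

/-- Projection on the column space of `X₁`. -/
def projR (X : Matrix (Fin n) (Fin k₁ ⊕ Fin k₂) ℝ) : Matrix (Fin n) (Fin n) ℝ :=
  X1 X * ((X1 X)ᵀ * X1 X)⁻¹ * (X1 X)ᵀ

/-- Projection on the column space of `X`. -/
def projU (X : Matrix (Fin n) (Fin k₁ ⊕ Fin k₂) ℝ) : Matrix (Fin n) (Fin n) ℝ :=
  X * (Xᵀ * X)⁻¹ * Xᵀ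

/-- The distribution `P_{n,β,σ}` of `Y = Xβ + u`, `u ~ N(0, σ² Iₙ)`. -/
def Pmeas (X : Matrix (Fin n) (Fin k₁ ⊕ Fin k₂) ℝ) (β : (Fin k₁ ⊕ Fin k₂) → ℝ) (σ2 : ℝ) :
    Measure (Fin n → ℝ) :=
  (gaussPi (Fin n) σ2).map (fun u => X.mulVec β + u)

/-- The function `h_{a,b}(ξ) = ξ / (1 + a exp(−ξ²/b))`. -/
def hfun (a b ξ : ℝ) : ℝ := ξ / (1 + a * Real.exp (-ξ ^ 2 / b))

/-- The inverse `g_{a,b}` of `h_{a,b}`. -/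
def gfun (a b : ℝ) : ℝ → ℝ := Function.invFun (hfun a b)

open Classical in
/-- `g(‖w‖) w / ‖w‖`, with the convention that this is `0` for `w = 0`. -/
def gdir (a b : ℝ) {ι : Type*} [Fintype ι] (w : ι → ℝ) : ι → ℝ :=
  if w = 0 then 0 else (gfun a b (enorm2 w) / enorm2 w) • w


/-- The finite-sample density `f_{n,β,σ}` of `√n(β̃ − β)` (Theorem 3 of the paper). -/
def fdens {n k₁ k₂ : ℕ} (X : Matrix (Fin n) (Fin k₁ ⊕ Fin k₂) ℝ)
    (β : (Fin k₁ ⊕ Fin k₂) → ℝ) (σ2 α : ℝ) (t : (Fin k₁ ⊕ Fin k₂) → ℝ) : ℝ :=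
  let a := Real.exp (2 * α * k₂)
  let b := σ2 / α
  let S := (X2 X)ᵀ * (1 - projR X) * X2 X
  let w := (Real.sqrt n)⁻¹ • (msqrt S).mulVec ((t ∘ Sum.inr) + Real.sqrt n • (β ∘ Sum.inr))
  (2 * π * σ2) ^ (-((k₁ : ℝ) + k₂) / 2) * Real.sqrt (((n : ℝ)⁻¹ • (Xᵀ * X)).det) *
    Real.exp (-(enorm2 ((Real.sqrt n)⁻¹ •
        ((msqrt ((X1 X)ᵀ * X1 X)).mulVec (t ∘ Sum.inl) +
          ((msqrt ((X1 X)ᵀ * X1 X))⁻¹ * (X1 X)ᵀ * X2 X).mulVec (t ∘ Sum.inr)))) ^ 2 /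
      (2 * σ2)) *
    (1 + Real.exp (-(α / σ2) * gfun a b (enorm2 w) ^ 2 + 2 * α * k₂)) ^ (k₂ : ℕ) *
    (1 + (2 * α / σ2) * gfun a b (enorm2 w) ^ 2 *
        (1 + Real.exp ((α / σ2) * gfun a b (enorm2 w) ^ 2 - 2 * α * k₂))⁻¹)⁻¹ *
    Real.exp (-(enorm2 (gdir a b w - (msqrt S).mulVec (β ∘ Sum.inr))) ^ 2 / (2 * σ2))

/-- The density `f_{∞,γ}` of the limiting distribution (formula (13) of the paper),
stated for a general symmetric positive definite matrix in place of `Q`. -/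
def fInfty {k₁ k₂ : ℕ} (Q : Matrix (Fin k₁ ⊕ Fin k₂) (Fin k₁ ⊕ Fin k₂) ℝ) (σ2 α : ℝ)
    (γ : Fin k₂ → ℝ) (t : (Fin k₁ ⊕ Fin k₂) → ℝ) : ℝ :=
  let a := Real.exp (2 * α * k₂)
  let b := σ2 / α
  let S := Q.toBlocks₂₂ - Q.toBlocks₂₁ * Q.toBlocks₁₁⁻¹ * Q.toBlocks₁₂
  let w := (msqrt S).mulVec ((t ∘ Sum.inr) + γ)
  (2 * π * σ2) ^ (-((k₁ : ℝ) + k₂) / 2) * Real.sqrt Q.det *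
    Real.exp (-(enorm2 ((msqrt Q.toBlocks₁₁).mulVec (t ∘ Sum.inl) +
        ((msqrt Q.toBlocks₁₁)⁻¹ * Q.toBlocks₁₂).mulVec (t ∘ Sum.inr))) ^ 2 / (2 * σ2)) *
    (1 + Real.exp (-(α / σ2) * gfun a b (enorm2 w) ^ 2 + 2 * α * k₂)) ^ (k₂ : ℕ) *
    (1 + (2 * α / σ2) * gfun a b (enorm2 w) ^ 2 *
        (1 + Real.exp ((α / σ2) * gfun a b (enorm2 w) ^ 2 - 2 * α * k₂))⁻¹)⁻¹ *
    Real.exp (-(enorm2 (gdir a b w - (msqrt S).mulVec γ)) ^ 2 / (2 * σ2))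


/-- The limiting law (12): the distribution of
`B_∞γ + C_∞Z₁ + [1 + exp(2αk₂) exp(−α‖Z₂ + (Q₂₂ − Q₂₁Q₁₁⁻¹Q₁₂)^{1/2}γ‖²/σ²)]⁻¹
  · (D_∞Z₂ − B_∞γ)` with `Z₁ ~ N(0, σ²I_{k₁})`, `Z₂ ~ N(0, σ²I_{k₂})` independent. -/
def limitLaw {k₁ k₂ : ℕ} (Q : Matrix (Fin k₁ ⊕ Fin k₂) (Fin k₁ ⊕ Fin k₂) ℝ) (σ2 α : ℝ)
    (γ : Fin k₂ → ℝ) : Measure ((Fin k₁ ⊕ Fin k₂) → ℝ) :=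
  ((gaussPi (Fin k₁) σ2).prod (gaussPi (Fin k₂) σ2)).map
    (fun Z : (Fin k₁ → ℝ) × (Fin k₂ → ℝ) =>
      (fromRows (Q.toBlocks₁₁⁻¹ * Q.toBlocks₁₂) (-1)).mulVec γ +
      (fromRows (msqrt Q.toBlocks₁₁)⁻¹ 0).mulVec Z.1 +
      (1 + Real.exp (2 * α * k₂) *
          Real.exp (-α * (enorm2 (Z.2 +
            (msqrt (Q.toBlocks₂₂ - Q.toBlocks₂₁ * Q.toBlocks₁₁⁻¹ * Q.toBlocks₁₂)).mulVec
              γ)) ^ 2 / σ2))⁻¹ •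
        ((fromRows
            (-(Q.toBlocks₁₁⁻¹ * Q.toBlocks₁₂ *
              (msqrt (Q.toBlocks₂₂ - Q.toBlocks₂₁ * Q.toBlocks₁₁⁻¹ * Q.toBlocks₁₂))⁻¹))
            ((msqrt (Q.toBlocks₂₂ - Q.toBlocks₂₁ * Q.toBlocks₁₁⁻¹ * Q.toBlocks₁₂))⁻¹)).mulVec
            Z.2 -
          (fromRows (Q.toBlocks₁₁⁻¹ * Q.toBlocks₁₂) (-1)).mulVec γ))


lemma enorm2_sq {ι : Type*} [Fintype ι] (v : ι → ℝ) : enorm2 v ^ 2 = ∑ i, v i ^ 2 := by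
  unfold enorm2
  exact Real.sq_sqrt (Finset.sum_nonneg fun i _ => sq_nonneg _)

lemma enorm2_sq_dot {ι : Type*} [Fintype ι] (v : ι → ℝ) : enorm2 v ^ 2 = v ⬝ᵥ v := by
  rw [enorm2_sq]; simp [dotProduct, sq]

lemma enorm2_nonneg {ι : Type*} [Fintype ι] (v : ι → ℝ) : 0 ≤ enorm2 v := Real.sqrt_nonneg _

lemma gaussPi_eq_pi (ι : Type*) [Fintype ι] (σ : ℝ) (hσ : 0 < σ) :
    gaussPi ι (σ ^ 2) = Measure.pi (fun _ : ι => ProbabilityTheory.gaussianReal 0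
      (Real.toNNReal (σ ^ 2))) := by
  have hs : (0 : ℝ) < σ ^ 2 := by positivity
  have hv : (Real.toNNReal (σ ^ 2)) ≠ 0 := by
    simp [Real.toNNReal_eq_zero, hσ.ne']
  have hc : ((Real.toNNReal (σ ^ 2) : ℝ≥0) : ℝ) = σ ^ 2 := Real.coe_toNNReal _ hs.le
  symm
  apply Measure.pi_eq
  intro s hms
  unfold gaussPi
  rw [withDensity_apply _ (MeasurableSet.univ_pi hms), ← lintegral_indicator (MeasurableSet.univ_pi hms)]
  simp_rw [ProbabilityTheory.gaussianReal_of_var_ne_zero 0 hv]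
  set p := ProbabilityTheory.gaussianPDFReal 0 (σ ^ 2).toNNReal with hp
  have hp0 : ∀ x, 0 ≤ p x := fun x => ProbabilityTheory.gaussianPDFReal_nonneg _ _ _
  have hIntg : ∀ i, Integrable ((s i).indicator p) :=
    fun i => (ProbabilityTheory.integrable_gaussianPDFReal _ _).indicator (hms i)
  have hnn : ∀ i x, 0 ≤ (s i).indicator p x := fun i x => Set.indicator_nonneg (fun x _ => hp0 x) x
  have this : ∀ i, (volume.withDensity (ProbabilityTheory.gaussianPDF 0 (σ ^ 2).toNNReal)) (s i)
      = ENNReal.ofReal (∫ x, (s i).indicator p x) := by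
    intro i
    rw [withDensity_apply _ (hms i), ← lintegral_indicator (hms i),
      ofReal_integral_eq_lintegral_ofReal (hIntg i) (ae_of_all _ (hnn i))]
    congr 1
    ext x
    by_cases hx : x ∈ s i
    · rw [Set.indicator_of_mem hx, Set.indicator_of_mem hx]; rfl
    · rw [Set.indicator_of_notMem hx, Set.indicator_of_notMem hx]; simp
  simp_rw [this]
  rw [← ENNReal.ofReal_prod_of_nonneg (fun i _ => integral_nonneg (hnn i)),
    ← integral_fintype_prod_volume_eq_prod, volume_pi, ofReal_integral_eq_lintegral_ofReal
      (Integrable.fintype_prod hIntg) (ae_of_all _ fun x => Finset.prod_nonneg fun i _ => hnn i _)]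
  congr 1
  ext x
  by_cases hx : x ∈ Set.univ.pi s
  · rw [Set.indicator_of_mem hx]
    have hx' : ∀ i, x i ∈ s i := by simpa using hx
    have : ∀ i, (s i).indicator p (x i) = p (x i) := fun i => Set.indicator_of_mem (hx' i) _
    simp_rw [this]
    congr 1
    simp_rw [hp, ProbabilityTheory.gaussianPDFReal, hc, Finset.prod_mul_distrib, ← Real.exp_sum]
    congr 1
    · rw [Finset.prod_const, Finset.card_univ, Real.sqrt_eq_rpow, ← Real.rpow_neg (by positivity),
        ← Real.rpow_mul_natCast (by positivity)]
      congr 1; ring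
    · rw [enorm2_sq, ← Finset.sum_div]; simp
  · rw [Set.indicator_of_notMem hx]
    have hx' : ∃ i, x i ∉ s i := by simpa using hx
    obtain ⟨i, hi⟩ := hx'
    rw [Finset.prod_eq_zero (Finset.mem_univ i) (Set.indicator_of_notMem hi _)]
    simp

instance gaussPi_prob (ι : Type*) [Fintype ι] (σ : ℝ) [h : Fact (0 < σ)] :
    IsProbabilityMeasure (gaussPi ι (σ ^ 2)) := by
  rw [gaussPi_eq_pi ι σ h.out]; infer_instance

lemma charFun_gaussPi (ι : Type*) [Fintype ι] (σ : ℝ) (hσ : 0 < σ) (t : EuclideanSpace ℝ ι) :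
    charFun ((gaussPi ι (σ ^ 2)).map (WithLp.toLp 2)) t
      = Complex.exp (-((σ ^ 2 * ‖t‖ ^ 2 / 2 : ℝ) : ℂ)) := by
  have hs : (0 : ℝ) < σ ^ 2 := by positivity
  have hc : ((Real.toNNReal (σ ^ 2) : ℝ≥0) : ℝ) = σ ^ 2 := Real.coe_toNNReal _ hs.le
  rw [gaussPi_eq_pi ι σ hσ, charFun_pi]
  simp_rw [ProbabilityTheory.charFun_gaussianReal, ← Complex.exp_sum, hc]
  congr 1
  rw [EuclideanSpace.real_norm_sq_eq]
  push_cast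
  simp [Finset.mul_sum, Finset.sum_div]

lemma gaussPi_map_matrix {m n : Type*} [Fintype m] [Fintype n] [DecidableEq m]
    (A : Matrix m n ℝ) (hA : A * Aᵀ = 1) (σ : ℝ) (hσ : 0 < σ) :
    (gaussPi n (σ ^ 2)).map (fun u => A.mulVec u) = gaussPi m (σ ^ 2) := by
  have : Fact (0 < σ) := ⟨hσ⟩
  have hAm : Measurable (fun u : n → ℝ => A.mulVec u) :=
    (Continuous.matrix_mulVec continuous_const continuous_id).measurable
  have : IsProbabilityMeasure ((gaussPi n (σ ^ 2)).map (fun u => A.mulVec u)) :=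
    Measure.isProbabilityMeasure_map hAm.aemeasurable
  have key : ((gaussPi n (σ ^ 2)).map (fun u => A.mulVec u)).map (WithLp.toLp 2)
      = (gaussPi m (σ ^ 2)).map (WithLp.toLp 2) := by
    apply Measure.ext_of_charFun (E := EuclideanSpace ℝ m)
    ext t
    rw [charFun_gaussPi m σ hσ]
    have h2 := charFun_gaussPi n σ hσ (WithLp.toLp 2 (Aᵀ.mulVec t.ofLp))
    have hn : ‖(WithLp.toLp 2 (Aᵀ.mulVec t.ofLp) : EuclideanSpace ℝ n)‖ ^ 2 = ‖t‖ ^ 2 := by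
      rw [EuclideanSpace.real_norm_sq_eq, EuclideanSpace.real_norm_sq_eq]
      have e1 : (Aᵀ.mulVec t.ofLp) ⬝ᵥ (Aᵀ.mulVec t.ofLp) = t.ofLp ⬝ᵥ t.ofLp := by
        rw [Matrix.dotProduct_mulVec, Matrix.vecMul_transpose, Matrix.mulVec_mulVec, hA,
          Matrix.one_mulVec]
      simpa [dotProduct, sq] using e1
    rw [hn] at h2
    rw [← h2]
    rw [Measure.map_map (by fun_prop) hAm]
    rw [charFun_apply, charFun_apply, integral_map (by fun_prop) (by fun_prop),
      integral_map (by fun_prop) (by fun_prop)]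
    congr 1
    ext u
    congr 3
    simp only [Function.comp_apply]
    rw [EuclideanSpace.inner_eq_star_dotProduct, EuclideanSpace.inner_eq_star_dotProduct]
    simp [Matrix.dotProduct_mulVec, Matrix.mulVec_transpose]
  have := congrArg (Measure.map (WithLp.ofLp)) key
  rw [Measure.map_map (by fun_prop) (by fun_prop),
    Measure.map_map (μ := gaussPi m (σ ^ 2)) (by fun_prop) (by fun_prop)] at this
  have hid : (WithLp.ofLp ∘ WithLp.toLp 2 : (m → ℝ) → (m → ℝ)) = id := by ext; simp
  rw [hid] at this
  simpa using this

lemma gaussPi_sum {l m : Type*} [Fintype l] [Fintype m] (σ : ℝ) (hσ : 0 < σ) :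
    (gaussPi (l ⊕ m) (σ ^ 2)).map (fun u => (u ∘ Sum.inl, u ∘ Sum.inr))
      = (gaussPi l (σ ^ 2)).prod (gaussPi m (σ ^ 2)) := by
  rw [gaussPi_eq_pi _ σ hσ, gaussPi_eq_pi _ σ hσ, gaussPi_eq_pi _ σ hσ]
  exact (measurePreserving_sumPiEquivProdPi (X := fun _ : l ⊕ m => ℝ)
    (fun _ => ProbabilityTheory.gaussianReal 0 (Real.toNNReal (σ ^ 2)))).map_eq

lemma gaussPi_map_pair {l m n : Type*} [Fintype l] [Fintype m] [Fintype n]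
    [DecidableEq l] [DecidableEq m]
    (A : Matrix l n ℝ) (B : Matrix m n ℝ) (hA : A * Aᵀ = 1) (hB : B * Bᵀ = 1)
    (hAB : A * Bᵀ = 0) (σ : ℝ) (hσ : 0 < σ) :
    (gaussPi n (σ ^ 2)).map (fun u => (A.mulVec u, B.mulVec u))
      = (gaussPi l (σ ^ 2)).prod (gaussPi m (σ ^ 2)) := by
  have hBA : B * Aᵀ = 0 := by
    have := congrArg Matrix.transpose hAB
    simpa using this
  have h : (fromRows A B) * (fromRows A B)ᵀ = 1 := by
    rw [Matrix.transpose_fromRows, Matrix.fromRows_mul_fromCols, hA, hB, hAB, hBA,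
      Matrix.fromBlocks_one]
  have h1 := gaussPi_map_matrix (fromRows A B) h σ hσ
  rw [← gaussPi_sum σ hσ, ← h1]
  have hm : Measurable (fun u => (fromRows A B).mulVec u) :=
    (Continuous.matrix_mulVec continuous_const continuous_id).measurable
  rw [Measure.map_map (by fun_prop) hm]
  congr 1

section radial
variable {a b : ℝ}

lemma hfun_hasDerivAt (ha : 0 < a) (ξ : ℝ) :
    HasDerivAt (hfun a b) ((1 * (1 + a * Real.exp (-ξ ^ 2 / b)) -
      ξ * (a * (Real.exp (-ξ ^ 2 / b) * (-(2 * ξ) / b)))) / (1 + a * Real.exp (-ξ ^ 2 / b)) ^ 2) ξ := by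
  unfold hfun
  have h1 : HasDerivAt (fun ξ : ℝ => -ξ ^ 2 / b) (-(2 * ξ) / b) ξ := by
    have := ((hasDerivAt_pow 2 ξ).neg.div_const b)
    simpa using this
  have h2 := ((h1.exp.const_mul a).const_add 1)
  have h3 := (hasDerivAt_id ξ).div h2 (by positivity)
  exact h3

lemma hfun_strictMono (ha : 0 < a) (hb : 0 < b) : StrictMono (hfun a b) := by
  apply strictMono_of_deriv_pos
  intro ξ
  rw [(hfun_hasDerivAt ha ξ).deriv]
  apply div_pos _ (by positivity)
  have : ξ * (a * (Real.exp (-ξ ^ 2 / b) * (-(2 * ξ) / b))) =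
    -(2 * a * Real.exp (-ξ ^ 2 / b) * ξ ^ 2 / b) := by ring
  rw [this]
  have : 0 ≤ (2 * a * Real.exp (-ξ ^ 2 / b) * ξ ^ 2 / b) := by positivity
  have : 0 < a * Real.exp (-ξ ^ 2 / b) := by positivity
  linarith

lemma hfun_continuous (ha : 0 < a) : Continuous (hfun a b) :=
  continuous_iff_continuousAt.2 fun ξ => (hfun_hasDerivAt ha ξ).continuousAt

lemma hfun_neg (ξ : ℝ) : hfun a b (-ξ) = -hfun a b ξ := by
  simp [hfun, neg_div]

lemma hfun_tendsto (ha : 0 < a) (hb : 0 < b) : Tendsto (hfun a b) atTop atTop := by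
  have h1 : Tendsto (fun ξ : ℝ => ξ / (1 + a)) atTop atTop :=
    tendsto_id.atTop_div_const (by positivity)
  apply tendsto_atTop_mono' _ _ h1
  filter_upwards [eventually_ge_atTop 0] with ξ hξ
  unfold hfun
  have : Real.exp (-ξ ^ 2 / b) ≤ 1 := by
    rw [Real.exp_le_one_iff, neg_div]
    have : 0 ≤ ξ ^ 2 / b := by positivity
    linarith
  gcongr
  nlinarith

lemma hfun_surj (ha : 0 < a) (hb : 0 < b) : Function.Surjective (hfun a b) := by
  apply (hfun_continuous ha).surjective (hfun_tendsto ha hb)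
  have h1 := (tendsto_neg_atTop_atBot.comp ((hfun_tendsto ha hb).comp tendsto_neg_atBot_atTop))
  refine h1.congr fun ξ => ?_
  simp [hfun_neg]

lemma gfun_hfun (ha : 0 < a) (hb : 0 < b) (ξ : ℝ) : gfun a b (hfun a b ξ) = ξ :=
  Function.leftInverse_invFun (hfun_strictMono ha hb).injective ξ

lemma hfun_gfun (ha : 0 < a) (hb : 0 < b) (r : ℝ) : hfun a b (gfun a b r) = r :=
  Function.rightInverse_invFun (hfun_surj ha hb) r

lemma gfun_continuous (ha : 0 < a) (hb : 0 < b) : Continuous (gfun a b) := by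
  let e := (hfun_strictMono ha hb).orderIsoOfSurjective (hfun a b) (hfun_surj ha hb)
  have : gfun a b = e.symm := by
    ext r
    apply (hfun_strictMono ha hb).injective
    rw [hfun_gfun ha hb]
    exact (e.apply_symm_apply r).symm
  rw [this]
  exact e.symm.continuous

/-- The factor `g(r)/r`. -/
def rho (a b r : ℝ) : ℝ := 1 + a * Real.exp (-(gfun a b r) ^ 2 / b)

lemma rho_pos (ha : 0 < a) (r : ℝ) : 0 < rho a b r := by unfold rho; positivity

lemma gfun_eq (ha : 0 < a) (hb : 0 < b) (r : ℝ) : gfun a b r = rho a b r * r := by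
  have h := hfun_gfun ha hb r
  have := rho_pos (b := b) ha r
  unfold hfun at h
  rw [div_eq_iff (by positivity)] at h
  rw [rho, mul_comm]
  exact h

lemma gfun_zero (ha : 0 < a) (hb : 0 < b) : gfun a b 0 = 0 := by
  rw [gfun_eq ha hb]; simp

lemma le_gfun (ha : 0 < a) (hb : 0 < b) {r : ℝ} (hr : 0 ≤ r) : r ≤ gfun a b r := by
  rw [gfun_eq ha hb, rho]
  have : 0 ≤ a * Real.exp (-(gfun a b r) ^ 2 / b) * r := by positivity
  linarith

lemma rho_continuous (ha : 0 < a) (hb : 0 < b) : Continuous (rho a b) := by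
  have := gfun_continuous ha hb
  unfold rho
  fun_prop

variable {ι : Type*} [Fintype ι]

lemma enorm2_eq_zero {v : ι → ℝ} : enorm2 v = 0 ↔ v = 0 := by
  constructor
  · intro h
    have h2 := enorm2_sq v
    rw [h] at h2
    have h3 := (Finset.sum_eq_zero_iff_of_nonneg (fun i _ => sq_nonneg (v i))).1
      (by rw [← h2]; norm_num)
    ext i
    simpa using h3 i (Finset.mem_univ i)
  · rintro rfl; simp [enorm2]

lemma enorm2_smul {c : ℝ} (hc : 0 ≤ c) (v : ι → ℝ) : enorm2 (c • v) = c * enorm2 v := by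
  unfold enorm2
  simp only [Pi.smul_apply, smul_eq_mul, mul_pow, ← Finset.mul_sum]
  rw [Real.sqrt_mul (by positivity), Real.sqrt_sq hc]

lemma enorm2_continuous : Continuous (enorm2 : (ι → ℝ) → ℝ) := by
  unfold enorm2; fun_prop

lemma gdir_eq (ha : 0 < a) (hb : 0 < b) (w : ι → ℝ) :
    gdir a b w = rho a b (enorm2 w) • w := by
  unfold gdir
  split_ifs with h
  · simp [h]
  · have : enorm2 w ≠ 0 := fun h' => h (enorm2_eq_zero.1 h')
    rw [gfun_eq ha hb, mul_div_cancel_right₀ _ this]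

/-- The radial map. -/
def Hmap (a b : ℝ) (z : ι → ℝ) : ι → ℝ := (1 + a * Real.exp (-(∑ i, z i ^ 2) / b))⁻¹ • z

lemma enorm2_Hmap (ha : 0 < a) (z : ι → ℝ) : enorm2 (Hmap a b z) = hfun a b (enorm2 z) := by
  unfold Hmap
  rw [enorm2_smul (by positivity), hfun, enorm2_sq]
  ring

lemma gfun_Hmap (ha : 0 < a) (hb : 0 < b) (z : ι → ℝ) :
    gfun a b (enorm2 (Hmap a b z)) = enorm2 z := by
  rw [enorm2_Hmap ha, gfun_hfun ha hb]

lemma gdir_Hmap (ha : 0 < a) (hb : 0 < b) (z : ι → ℝ) : gdir a b (Hmap a b z) = z := by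
  rw [gdir_eq ha hb, rho, gfun_Hmap ha hb, Hmap, enorm2_sq, smul_smul, mul_inv_cancel₀, one_smul]
  positivity

lemma Hmap_gdir (ha : 0 < a) (hb : 0 < b) (w : ι → ℝ) : Hmap a b (gdir a b w) = w := by
  have h0 := rho_pos (b := b) ha (enorm2 w)
  have h1 : enorm2 (gdir a b w) = gfun a b (enorm2 w) := by
    rw [gdir_eq ha hb, enorm2_smul h0.le, ← gfun_eq ha hb]
  unfold Hmap
  rw [← enorm2_sq, h1]
  change (rho a b (enorm2 w))⁻¹ • _ = _
  rw [gdir_eq ha hb, smul_smul, inv_mul_cancel₀ h0.ne', one_smul]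

lemma gdir_continuous (ha : 0 < a) (hb : 0 < b) : Continuous (gdir a b : (ι → ℝ) → (ι → ℝ)) := by
  have : (gdir a b : (ι → ℝ) → (ι → ℝ)) = fun w => rho a b (enorm2 w) • w := by
    ext w : 1; exact gdir_eq ha hb w
  rw [this]
  exact ((rho_continuous ha hb).comp enorm2_continuous).smul continuous_id

lemma Hmap_continuous (ha : 0 < a) : Continuous (Hmap a b : (ι → ℝ) → (ι → ℝ)) := by
  unfold Hmap
  have h : Continuous (fun z : ι → ℝ => 1 + a * Real.exp (-(∑ i, z i ^ 2) / b)) := by fun_prop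
  exact (h.inv₀ (fun z => by positivity)).smul continuous_id

/-- The Jacobian. -/
def Jfun (a b : ℝ) (z : ι → ℝ) : ℝ :=
  ((1 + a * Real.exp (-(enorm2 z) ^ 2 / b))⁻¹) ^ (Fintype.card ι) *
    (1 + 2 / b * enorm2 z ^ 2 * (1 + a⁻¹ * Real.exp (enorm2 z ^ 2 / b))⁻¹)

variable [DecidableEq ι]

lemma det_smul_one_add (c κ : ℝ) (hc : c ≠ 0) (z : ι → ℝ) :
    (c • (1 : Matrix ι ι ℝ) + κ • vecMulVec z z).det
      = c ^ Fintype.card ι * (1 + κ / c * ∑ i, z i ^ 2) := by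
  have : c • (1 : Matrix ι ι ℝ) + κ • vecMulVec z z
    = c • (1 + replicateCol Unit ((κ / c) • z) * replicateRow Unit z) := by
    ext i j
    simp [Matrix.mul_apply, vecMulVec_apply]
    field_simp
  rw [this, Matrix.det_smul, Matrix.det_one_add_replicateCol_mul_replicateRow]
  congr 2
  simp [dotProduct, Finset.mul_sum]
  apply Finset.sum_congr rfl
  intro i _
  ring

lemma Hmap_hasFDerivAt (ha : 0 < a) (hb : 0 < b) (z : ι → ℝ) :
    ∃ L : (ι → ℝ) →L[ℝ] (ι → ℝ), HasFDerivAt (Hmap a b) L z ∧ L.det = Jfun a b z := by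
  set s := ∑ i, z i ^ 2 with hs
  set E := Real.exp (-s / b) with hE
  have hE0 : 0 < E := Real.exp_pos _
  have h1 : HasFDerivAt (fun z : ι → ℝ => ∑ i, z i ^ 2)
      (∑ i, (2 * z i) • (ContinuousLinearMap.proj i : (ι → ℝ) →L[ℝ] ℝ)) z := by
    apply HasFDerivAt.fun_sum
    intro i _
    have := (hasDerivAt_pow 2 (z i)).comp_hasFDerivAt z
      ((ContinuousLinearMap.proj i : (ι → ℝ) →L[ℝ] ℝ).hasFDerivAt)
    exact this.congr_fderiv (by simp)
  have h2 : HasDerivAt (fun s : ℝ => (1 + a * Real.exp (-s / b))⁻¹)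
      ((1 + a * E)⁻¹ ^ 2 * (a * E / b)) s := by
    have e1 : HasDerivAt (fun s : ℝ => -s / b) (-1 / b) s := (hasDerivAt_id s).neg.div_const b
    have e2 := ((e1.exp.const_mul a).const_add 1).inv (by positivity)
    have e3 : (1 + a * E)⁻¹ ^ 2 * (a * E / b) =
        -(a * (rexp (-s / b) * (-1 / b))) / (1 + a * rexp (-s / b)) ^ 2 := by
      rw [← hE]
      field_simp
    rw [e3]
    exact e2
  have h3 := (h2.comp_hasFDerivAt z h1).smul (hasFDerivAt_id z)
  refine ⟨_, h3, ?_⟩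
  set L := (((fun s : ℝ => (1 + a * Real.exp (-s / b))⁻¹) ∘ fun z : ι → ℝ => ∑ i, z i ^ 2) z • ContinuousLinearMap.id ℝ (ι → ℝ) +
    (((1 + a * E)⁻¹ ^ 2 * (a * E / b)) • ∑ i, (2 * z i) • (ContinuousLinearMap.proj i : (ι → ℝ) →L[ℝ] ℝ)).smulRight (id z)) with hL
  have h4 : (L : (ι → ℝ) →ₗ[ℝ] (ι → ℝ)) = Matrix.toLin' (((1 + a * E)⁻¹) • (1 : Matrix ι ι ℝ) +
      (2 * ((1 + a * E)⁻¹ ^ 2 * (a * E / b))) • vecMulVec z z) := by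
    apply LinearMap.ext
    intro v
    ext i
    simp only [hL, Matrix.toLin'_apply, Matrix.add_mulVec, Matrix.smul_mulVec, Matrix.one_mulVec,
      vecMulVec_mulVec]
    simp [← hs, ← hE, dotProduct, Finset.mul_sum, Finset.sum_mul]
    apply Finset.sum_congr rfl
    intro j _
    ring
  change LinearMap.det (L : (ι → ℝ) →ₗ[ℝ] (ι → ℝ)) = _
  rw [h4, LinearMap.det_toLin', det_smul_one_add _ _ (by positivity), Jfun, enorm2_sq, ← hs, ← hE]
  congr 2
  have : Real.exp (s / b) = E⁻¹ := by rw [hE, ← Real.exp_neg]; congr 1; ring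
  rw [this]
  field_simp
  ring

lemma map_Hmap (ha : 0 < a) (hb : 0 < b) (p q : (ι → ℝ) → ℝ≥0∞)
    (hq : Measurable q) (hpq : ∀ z, p z = ENNReal.ofReal (Jfun a b z) * q (Hmap a b z)) :
    (volume.withDensity p).map (Hmap a b) = volume.withDensity q := by
  choose L hL hdet using Hmap_hasFDerivAt (ι := ι) ha hb
  have hinj : Function.Injective (Hmap a b : (ι → ℝ) → (ι → ℝ)) :=
    Function.LeftInverse.injective (g := gdir a b) (gdir_Hmap ha hb)
  have hsurj : Function.Surjective (Hmap a b : (ι → ℝ) → (ι → ℝ)) :=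
    Function.RightInverse.surjective (g := gdir a b) (Hmap_gdir ha hb)
  have h := map_withDensity_abs_det_fderiv_eq_addHaar (volume : Measure (ι → ℝ)) (s := Set.univ)
    (f := Hmap a b) (f' := L) MeasurableSet.univ.nullMeasurableSet
    (fun x _ => (hL x).hasFDerivWithinAt) hinj.injOn
  rw [Set.image_univ, hsurj.range_eq, Measure.restrict_univ] at h
  have hJ0 : ∀ z : ι → ℝ, 0 ≤ Jfun a b z := fun z => by unfold Jfun; positivity
  simp_rw [hdet, abs_of_nonneg (hJ0 _)] at h
  have hm : Measurable (Hmap a b : (ι → ℝ) → (ι → ℝ)) := (Hmap_continuous ha).measurable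
  have hJm : Measurable (fun z : ι → ℝ => ENNReal.ofReal (Jfun a b z)) := by
    have := (enorm2_continuous (ι := ι)).measurable
    unfold Jfun
    fun_prop
  conv_rhs => rw [← h]
  ext t ht
  rw [Measure.map_apply hm ht, withDensity_apply _ (hm ht), withDensity_apply _ ht,
    setLIntegral_map ht hq hm]
  refine Eq.trans ?_ (setLIntegral_withDensity_eq_setLIntegral_mul volume hJm (hq.comp hm)
    (hm ht)).symm
  congr 1
  ext z
  rw [hpq]; rfl
end radial

section mats

lemma msqrt_spec {ι : Type*} [Fintype ι] [DecidableEq ι] {A : Matrix ι ι ℝ} (h : A.PosSemidef) :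
    (msqrt A)ᵀ = msqrt A ∧ msqrt A * msqrt A = A := by
  have e : msqrt A = (h.isHermitian.eigenvectorUnitary : Matrix ι ι ℝ) *
      Matrix.diagonal (Real.sqrt ∘ h.isHermitian.eigenvalues) *
      (star h.isHermitian.eigenvectorUnitary : Matrix ι ι ℝ) := by
    unfold msqrt; rw [dif_pos h]
  set U := h.isHermitian.eigenvectorUnitary with hU
  have hUU : (star (U : Matrix ι ι ℝ)) * (U : Matrix ι ι ℝ) = 1 := Unitary.coe_star_mul_self U
  constructor
  · rw [e]
    simp [Matrix.star_eq_conjTranspose, Matrix.transpose_mul, Matrix.mul_assoc]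
  · rw [e]
    have hd : Matrix.diagonal (Real.sqrt ∘ h.isHermitian.eigenvalues) *
        Matrix.diagonal (Real.sqrt ∘ h.isHermitian.eigenvalues) =
        Matrix.diagonal (h.isHermitian.eigenvalues) := by
      rw [Matrix.diagonal_mul_diagonal]
      congr 1
      ext i
      exact Real.mul_self_sqrt (h.eigenvalues_nonneg i)
    have hs := h.isHermitian.spectral_theorem
    rw [Unitary.conjStarAlgAut_apply, ← hU] at hs
    calc _ = (U : Matrix ι ι ℝ) * (Matrix.diagonal (Real.sqrt ∘ h.isHermitian.eigenvalues) *
          (star (U : Matrix ι ι ℝ) * (U : Matrix ι ι ℝ)) *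
          Matrix.diagonal (Real.sqrt ∘ h.isHermitian.eigenvalues)) * star (U : Matrix ι ι ℝ) := by
            simp only [Matrix.mul_assoc]
      _ = (U : Matrix ι ι ℝ) * Matrix.diagonal (h.isHermitian.eigenvalues) * star (U : Matrix ι ι ℝ) := by
            rw [hUU, Matrix.mul_one, hd]
      _ = A := by conv_rhs => rw [hs]
                  rfl

lemma msqrt_det_sq {ι : Type*} [Fintype ι] [DecidableEq ι] {A : Matrix ι ι ℝ} (h : A.PosSemidef) :
    (msqrt A).det ^ 2 = A.det := by
  rw [sq, ← Matrix.det_mul, (msqrt_spec h).2]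

lemma msqrt_det_ne {ι : Type*} [Fintype ι] [DecidableEq ι] {A : Matrix ι ι ℝ} (h : A.PosDef) :
    (msqrt A).det ≠ 0 := by
  intro h0
  have := msqrt_det_sq h.posSemidef
  rw [h0] at this
  have := h.det_pos
  simp_all

lemma enorm2_mulVec {l m : Type*} [Fintype l] [Fintype m] (T : Matrix l m ℝ) (S : Matrix m m ℝ)
    (h : Tᵀ * T = S) (v : m → ℝ) : enorm2 (T.mulVec v) ^ 2 = v ⬝ᵥ S.mulVec v := by
  rw [enorm2_sq_dot, Matrix.dotProduct_mulVec, Matrix.vecMul_mulVec, h, ← Matrix.dotProduct_mulVec]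

lemma enorm2_mulVec' {l m : Type*} [Fintype l] [Fintype m] (T : Matrix l m ℝ) (S : Matrix m m ℝ)
    (h : Tᵀ * T = S) (v : m → ℝ) : enorm2 (T.mulVec v) = Real.sqrt (v ⬝ᵥ S.mulVec v) := by
  rw [← enorm2_mulVec T S h, Real.sqrt_sq (enorm2_nonneg _)]

variable {k₁ k₂ : ℕ}

/-- Schur complement. -/
def Sch (Q : Matrix (Fin k₁ ⊕ Fin k₂) (Fin k₁ ⊕ Fin k₂) ℝ) : Matrix (Fin k₂) (Fin k₂) ℝ :=
  Q.toBlocks₂₂ - Q.toBlocks₂₁ * Q.toBlocks₁₁⁻¹ * Q.toBlocks₁₂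

variable {Q : Matrix (Fin k₁ ⊕ Fin k₂) (Fin k₁ ⊕ Fin k₂) ℝ}

lemma Q11_posDef (hQ : Q.PosDef) : Q.toBlocks₁₁.PosDef :=
  hQ.submatrix (e := Sum.inl) Sum.inl_injective

lemma Q21_eq (hQ : Q.PosDef) : Q.toBlocks₂₁ = Q.toBlocks₁₂ᵀ := by
  ext i j
  have := hQ.1.apply (Sum.inr i) (Sum.inl j)
  simpa [toBlocks₂₁, toBlocks₁₂] using this.symm

lemma det_isUnit_of_posDef {ι : Type*} [Fintype ι] [DecidableEq ι] {A : Matrix ι ι ℝ}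
    (h : A.PosDef) : IsUnit A.det := h.det_pos.ne'.isUnit

lemma Q11_symm (hQ : Q.PosDef) : Q.toBlocks₁₁ᵀ = Q.toBlocks₁₁ := by
  have := (Q11_posDef hQ).1.eq
  rwa [conjTranspose_eq_transpose_of_trivial] at this

lemma quad_decomp (hQ : Q.PosDef) (t : Fin k₁ ⊕ Fin k₂ → ℝ) :
    t ⬝ᵥ Q.mulVec t =
      (t ∘ Sum.inl + (Q.toBlocks₁₁⁻¹ * Q.toBlocks₁₂).mulVec (t ∘ Sum.inr)) ⬝ᵥ
        Q.toBlocks₁₁.mulVec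
          (t ∘ Sum.inl + (Q.toBlocks₁₁⁻¹ * Q.toBlocks₁₂).mulVec (t ∘ Sum.inr)) +
      (t ∘ Sum.inr) ⬝ᵥ (Sch Q).mulVec (t ∘ Sum.inr) := by
  letI : Invertible Q.toBlocks₁₁ := Matrix.invertibleOfIsUnitDet _ (det_isUnit_of_posDef (Q11_posDef hQ))
  have h := schur_complement_eq₁₁ Q.toBlocks₁₂ Q.toBlocks₂₂ (t ∘ Sum.inl) (t ∘ Sum.inr)
    (Q11_posDef hQ).1
  simp only [star_trivial, conjTranspose_eq_transpose_of_trivial, ← Q21_eq hQ,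
    fromBlocks_toBlocks, ← Matrix.dotProduct_mulVec, Sum.elim_comp_inl_inr] at h
  exact h

lemma Sch_posDef (hQ : Q.PosDef) : (Sch Q).PosDef := by
  refine Matrix.PosDef.of_dotProduct_mulVec_pos ?_ ?_
  · have h := (Matrix.IsHermitian.fromBlocks₁₁ Q.toBlocks₁₂ Q.toBlocks₂₂ (Q11_posDef hQ).1).1 (by
      simp only [conjTranspose_eq_transpose_of_trivial, ← Q21_eq hQ, fromBlocks_toBlocks]
      exact hQ.1)
    rw [conjTranspose_eq_transpose_of_trivial, ← Q21_eq hQ] at h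
    exact h
  · intro x hx
    have h := quad_decomp hQ (Sum.elim (-(Q.toBlocks₁₁⁻¹ * Q.toBlocks₁₂).mulVec x) x)
    simp only [Sum.elim_comp_inl, Sum.elim_comp_inr, neg_add_cancel, zero_dotProduct, zero_add] at h
    rw [star_trivial, ← h]
    have := hQ.dotProduct_mulVec_pos (x := Sum.elim (-(Q.toBlocks₁₁⁻¹ * Q.toBlocks₁₂).mulVec x) x) (by
      intro h0
      apply hx
      ext i
      exact congrFun h0 (Sum.inr i))
    simpa using this

lemma det_eq_Sch (hQ : Q.PosDef) : Q.det = Q.toBlocks₁₁.det * (Sch Q).det := by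
  letI : Invertible Q.toBlocks₁₁ := Matrix.invertibleOfIsUnitDet _ (det_isUnit_of_posDef (Q11_posDef hQ))
  have h := Matrix.det_fromBlocks₁₁ Q.toBlocks₁₁ Q.toBlocks₁₂ Q.toBlocks₂₁ Q.toBlocks₂₂
  rw [fromBlocks_toBlocks, Matrix.invOf_eq_nonsing_inv] at h
  exact h

/-- Radial factor of the densities. -/
def qrad (k₂ : ℕ) (σ2 α G : ℝ) : ℝ :=
  (1 + Real.exp (-(α / σ2) * G ^ 2 + 2 * α * k₂)) ^ (k₂ : ℕ) *
    (1 + (2 * α / σ2) * G ^ 2 * (1 + Real.exp ((α / σ2) * G ^ 2 - 2 * α * k₂))⁻¹)⁻¹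

/-- Common form of the densities. -/
def Fgen (k₁ k₂ : ℕ) (σ2 α d : ℝ) (y : Fin k₁ → ℝ) (w m : Fin k₂ → ℝ) : ℝ :=
  (2 * π * σ2) ^ (-((k₁ : ℝ) + k₂) / 2) * Real.sqrt d *
    Real.exp (-(enorm2 y) ^ 2 / (2 * σ2)) *
    qrad k₂ σ2 α (gfun (Real.exp (2 * α * k₂)) (σ2 / α) (enorm2 w)) *
    Real.exp (-(enorm2 (gdir (Real.exp (2 * α * k₂)) (σ2 / α) w - m)) ^ 2 / (2 * σ2))

/-- Quadratic form version of the limiting density. -/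
def fq (Q : Matrix (Fin k₁ ⊕ Fin k₂) (Fin k₁ ⊕ Fin k₂) ℝ) (σ2 α : ℝ)
    (γ : Fin k₂ → ℝ) (t : (Fin k₁ ⊕ Fin k₂) → ℝ) : ℝ :=
  let a := Real.exp (2 * α * k₂)
  let b := σ2 / α
  let y := t ∘ Sum.inl + (Q.toBlocks₁₁⁻¹ * Q.toBlocks₁₂).mulVec (t ∘ Sum.inr)
  let v := t ∘ Sum.inr + γ
  let r := Real.sqrt (v ⬝ᵥ (Sch Q).mulVec v)
  let x := rho a b r • v - γ
  (2 * π * σ2) ^ (-((k₁ : ℝ) + k₂) / 2) * Real.sqrt Q.det *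
    Real.exp (-(y ⬝ᵥ Q.toBlocks₁₁.mulVec y) / (2 * σ2)) * qrad k₂ σ2 α (gfun a b r) *
    Real.exp (-(x ⬝ᵥ (Sch Q).mulVec x) / (2 * σ2))

lemma Fgen_eq_fq {σ2 α : ℝ} (hσ : 0 < σ2) (hα : 0 < α) (T1 : Matrix (Fin k₁) (Fin k₁) ℝ)
    (T2 : Matrix (Fin k₂) (Fin k₂) ℝ) (h1 : T1ᵀ * T1 = Q.toBlocks₁₁) (h2 : T2ᵀ * T2 = Sch Q)
    (γ : Fin k₂ → ℝ) (t : (Fin k₁ ⊕ Fin k₂) → ℝ) :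
    Fgen k₁ k₂ σ2 α Q.det
      (T1.mulVec (t ∘ Sum.inl + (Q.toBlocks₁₁⁻¹ * Q.toBlocks₁₂).mulVec (t ∘ Sum.inr)))
      (T2.mulVec (t ∘ Sum.inr + γ)) (T2.mulVec γ) = fq Q σ2 α γ t := by
  unfold Fgen fq
  have hb : 0 < σ2 / α := by positivity
  rw [gdir_eq (Real.exp_pos _) hb, ← Matrix.mulVec_smul, ← Matrix.mulVec_sub]
  rw [enorm2_mulVec T1 _ h1, enorm2_mulVec T2 _ h2, enorm2_mulVec' T2 _ h2]

lemma fInfty_eq_Fgen {σ2 α : ℝ} (hQ : Q.PosDef) (γ : Fin k₂ → ℝ) (t : (Fin k₁ ⊕ Fin k₂) → ℝ) :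
    fInfty Q σ2 α γ t = Fgen k₁ k₂ σ2 α Q.det
      ((msqrt Q.toBlocks₁₁).mulVec
        (t ∘ Sum.inl + (Q.toBlocks₁₁⁻¹ * Q.toBlocks₁₂).mulVec (t ∘ Sum.inr)))
      ((msqrt (Sch Q)).mulVec (t ∘ Sum.inr + γ)) ((msqrt (Sch Q)).mulVec γ) := by
  have hs := msqrt_spec (Q11_posDef hQ).posSemidef
  have e : (msqrt Q.toBlocks₁₁)⁻¹ * Q.toBlocks₁₂ =
      msqrt Q.toBlocks₁₁ * (Q.toBlocks₁₁⁻¹ * Q.toBlocks₁₂) := by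
    conv_rhs => rw [← hs.2, Matrix.mul_inv_rev, hs.2]
    rw [← Matrix.mul_assoc, ← Matrix.mul_assoc, Matrix.mul_nonsing_inv _
      (msqrt_det_ne (Q11_posDef hQ)).isUnit, Matrix.one_mul]
  unfold fInfty Fgen qrad
  rw [e, ← Matrix.mulVec_mulVec, ← Matrix.mulVec_add]
  simp only [mul_assoc]
  rfl

lemma fInfty_eq_fq {σ2 α : ℝ} (hQ : Q.PosDef) (hσ : 0 < σ2) (hα : 0 < α) (γ : Fin k₂ → ℝ)
    (t : (Fin k₁ ⊕ Fin k₂) → ℝ) : fInfty Q σ2 α γ t = fq Q σ2 α γ t := by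
  rw [fInfty_eq_Fgen hQ]
  apply Fgen_eq_fq hσ hα
  · have hs := msqrt_spec (Q11_posDef hQ).posSemidef
    rw [hs.1, hs.2]
  · have hs := msqrt_spec (Sch_posDef hQ).posSemidef
    rw [hs.1, hs.2]

end mats

section fin

variable {n k₁ k₂ : ℕ}

/-- Normalised Gram matrix. -/
def Qn (X : Matrix (Fin n) (Fin k₁ ⊕ Fin k₂) ℝ) : Matrix (Fin k₁ ⊕ Fin k₂) (Fin k₁ ⊕ Fin k₂) ℝ :=
  (n : ℝ)⁻¹ • (Xᵀ * X)

variable {X : Matrix (Fin n) (Fin k₁ ⊕ Fin k₂) ℝ}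

lemma mulVec_inj_of_rank (hX : X.rank = k₁ + k₂) : Function.Injective X.mulVec := by
  rw [Matrix.mulVec_injective_iff]
  rw [linearIndependent_iff_card_eq_finrank_span, Set.finrank, ← Matrix.rank_eq_finrank_span_cols, hX]
  simp

lemma gram_posDef (hX : X.rank = k₁ + k₂) : (Xᵀ * X).PosDef := by
  have := Matrix.PosDef.conjTranspose_mul_self X (mulVec_inj_of_rank hX)
  rwa [conjTranspose_eq_transpose_of_trivial] at this

lemma Qn_posDef (hn : 0 < n) (hX : X.rank = k₁ + k₂) : (Qn X).PosDef :=
  (gram_posDef hX).smul (by positivity)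

lemma Qn11 : (Qn X).toBlocks₁₁ = (n : ℝ)⁻¹ • ((X1 X)ᵀ * X1 X) := rfl
lemma Qn12 : (Qn X).toBlocks₁₂ = (n : ℝ)⁻¹ • ((X1 X)ᵀ * X2 X) := rfl
lemma Qn21 : (Qn X).toBlocks₂₁ = (n : ℝ)⁻¹ • ((X2 X)ᵀ * X1 X) := rfl
lemma Qn22 : (Qn X).toBlocks₂₂ = (n : ℝ)⁻¹ • ((X2 X)ᵀ * X2 X) := rfl

lemma gram11_posDef (hX : X.rank = k₁ + k₂) : ((X1 X)ᵀ * X1 X).PosDef :=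
  Q11_posDef (gram_posDef hX)

lemma Qn11_inv (hn : 0 < n) (hX : X.rank = k₁ + k₂) :
    (Qn X).toBlocks₁₁⁻¹ = (n : ℝ) • ((X1 X)ᵀ * X1 X)⁻¹ := by
  rw [Qn11]
  apply Matrix.inv_eq_left_inv
  have hn' : (n : ℝ) ≠ 0 := by positivity
  rw [Matrix.smul_mul, Matrix.mul_smul, smul_smul, mul_inv_cancel₀ hn', one_smul,
    Matrix.nonsing_inv_mul _ (det_isUnit_of_posDef (gram11_posDef hX))]

lemma Qn_coef (hn : 0 < n) (hX : X.rank = k₁ + k₂) :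
    (Qn X).toBlocks₁₁⁻¹ * (Qn X).toBlocks₁₂ = ((X1 X)ᵀ * X1 X)⁻¹ * ((X1 X)ᵀ * X2 X) := by
  have hn' : (n : ℝ) ≠ 0 := by positivity
  rw [Qn11_inv hn hX, Qn12, Matrix.smul_mul, Matrix.mul_smul, smul_smul, mul_inv_cancel₀ hn',
    one_smul]

lemma Sch_Qn (hn : 0 < n) (hX : X.rank = k₁ + k₂) :
    Sch (Qn X) = (n : ℝ)⁻¹ • ((X2 X)ᵀ * (1 - projR X) * X2 X) := by
  unfold Sch projR
  rw [Matrix.mul_assoc, Qn_coef hn hX, Qn22, Qn21, Matrix.smul_mul, ← smul_sub]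
  simp only [Matrix.mul_sub, Matrix.sub_mul, Matrix.mul_one, Matrix.mul_assoc]

lemma scaled_msqrt {ι : Type*} [Fintype ι] [DecidableEq ι] {A B : Matrix ι ι ℝ} (hn : 0 < n)
    (hB : B = (n : ℝ)⁻¹ • A) (h : A.PosSemidef) :
    ((Real.sqrt n)⁻¹ • msqrt A)ᵀ * ((Real.sqrt n)⁻¹ • msqrt A) = B := by
  rw [Matrix.transpose_smul, (msqrt_spec h).1, Matrix.smul_mul, Matrix.mul_smul, smul_smul,
    (msqrt_spec h).2, hB, ← mul_inv, Real.mul_self_sqrt (by positivity)]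

lemma S_posDef (hn : 0 < n) (hX : X.rank = k₁ + k₂) :
    ((X2 X)ᵀ * (1 - projR X) * X2 X).PosDef := by
  have h := (Sch_posDef (Qn_posDef hn hX)).smul (show (0 : ℝ) < n by positivity)
  rw [Sch_Qn hn hX, smul_smul, mul_inv_cancel₀ (by positivity), one_smul] at h
  exact h

lemma fdens_eq_fq {σ2 α : ℝ} (hn : 0 < n) (hX : X.rank = k₁ + k₂) (hσ : 0 < σ2) (hα : 0 < α)
    (β : (Fin k₁ ⊕ Fin k₂) → ℝ) (t : (Fin k₁ ⊕ Fin k₂) → ℝ) :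
    fdens X β σ2 α t = fq (Qn X) σ2 α (Real.sqrt n • (β ∘ Sum.inr)) t := by
  have hn' : Real.sqrt n ≠ 0 := by positivity
  rw [← Fgen_eq_fq hσ hα _ _ (scaled_msqrt hn Qn11 (gram11_posDef hX).posSemidef)
    (scaled_msqrt hn (Sch_Qn hn hX) (S_posDef hn hX).posSemidef)]
  have hs := msqrt_spec (gram11_posDef hX).posSemidef
  have e : (msqrt ((X1 X)ᵀ * X1 X))⁻¹ * (X1 X)ᵀ * X2 X =
      msqrt ((X1 X)ᵀ * X1 X) * ((Qn X).toBlocks₁₁⁻¹ * (Qn X).toBlocks₁₂) := by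
    rw [Qn_coef hn hX]
    have : ((X1 X)ᵀ * X1 X)⁻¹ = (msqrt ((X1 X)ᵀ * X1 X))⁻¹ * (msqrt ((X1 X)ᵀ * X1 X))⁻¹ := by
      conv_lhs => rw [← hs.2, Matrix.mul_inv_rev]
    rw [this, Matrix.mul_assoc _ _ ((X1 X)ᵀ * X2 X), ← Matrix.mul_assoc (msqrt _),
      Matrix.mul_nonsing_inv _ (msqrt_det_ne (gram11_posDef hX)).isUnit, Matrix.one_mul,
      Matrix.mul_assoc]
  have e2 : ((Real.sqrt n)⁻¹ • msqrt ((X2 X)ᵀ * (1 - projR X) * X2 X)).mulVec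
      (Real.sqrt n • (β ∘ Sum.inr)) =
      (msqrt ((X2 X)ᵀ * (1 - projR X) * X2 X)).mulVec (β ∘ Sum.inr) := by
    rw [Matrix.smul_mulVec, Matrix.mulVec_smul, smul_smul, inv_mul_cancel₀ hn', one_smul]
  rw [e2]
  unfold fdens Fgen qrad
  rw [e, ← Matrix.mulVec_mulVec, ← Matrix.mulVec_add]
  simp only [mul_assoc, Matrix.smul_mulVec]
  rfl

end fin

section lim

lemma map_withDensity_comp {E F : Type*} [MeasurableSpace E] [MeasurableSpace F] (μ : Measure E)
    (g : E → F) (hg : Measurable g) (p : F → ℝ≥0∞) (hp : Measurable p) :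
    (μ.withDensity (fun x => p (g x))).map g = (μ.map g).withDensity p := by
  ext s hs
  rw [Measure.map_apply hg hs, withDensity_apply _ (hg hs), withDensity_apply _ hs,
    setLIntegral_map hs hp hg]

lemma enorm2_measurable {ι : Type*} [Fintype ι] : Measurable (enorm2 : (ι → ℝ) → ℝ) :=
  enorm2_continuous.measurable

lemma gaussPi_map_add (ι : Type*) [Fintype ι] (σ2 : ℝ) (m : ι → ℝ) :
    (gaussPi ι σ2).map (fun z => z + m) = volume.withDensity (fun x => ENNReal.ofReal
      ((2 * π * σ2) ^ (-(Fintype.card ι : ℝ) / 2) *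
        Real.exp (-(enorm2 (x - m)) ^ 2 / (2 * σ2)))) := by
  have h := map_withDensity_comp (volume : Measure (ι → ℝ)) (fun z => z + m)
    (measurable_id.add_const m) (fun x => ENNReal.ofReal
      ((2 * π * σ2) ^ (-(Fintype.card ι : ℝ) / 2) *
        Real.exp (-(enorm2 (x - m)) ^ 2 / (2 * σ2)))) (by
        have := enorm2_measurable (ι := ι)
        fun_prop)
  rw [map_add_right_eq_self (volume : Measure (ι → ℝ))] at h
  rw [← h]
  simp only [add_sub_cancel_right]
  rfl

lemma Jfun_qrad {k₂ : ℕ} {σ2 α : ℝ} (hσ : 0 < σ2) (hα : 0 < α) (z : Fin k₂ → ℝ) :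
    Jfun (Real.exp (2 * α * k₂)) (σ2 / α) z * qrad k₂ σ2 α (enorm2 z) = 1 := by
  unfold Jfun qrad
  have e1 : Real.exp (2 * α * k₂) * Real.exp (-enorm2 z ^ 2 / (σ2 / α)) =
      Real.exp (-(α / σ2) * enorm2 z ^ 2 + 2 * α * k₂) := by
    rw [← Real.exp_add]; congr 1; field_simp; ring
  have e2 : (Real.exp (2 * α * k₂))⁻¹ * Real.exp (enorm2 z ^ 2 / (σ2 / α)) =
      Real.exp ((α / σ2) * enorm2 z ^ 2 - 2 * α * k₂) := by
    rw [← Real.exp_neg, ← Real.exp_add]; congr 1; field_simp; ring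
  have e3 : 2 / (σ2 / α) = 2 * α / σ2 := by field_simp
  rw [e1, e2, e3, Fintype.card_fin, inv_pow]
  set A := (1 + Real.exp (-(α / σ2) * enorm2 z ^ 2 + 2 * α * k₂)) ^ k₂ with hA
  set B := (1 + 2 * α / σ2 * enorm2 z ^ 2 *
    (1 + Real.exp ((α / σ2) * enorm2 z ^ 2 - 2 * α * k₂))⁻¹) with hB
  have hA0 : A ≠ 0 := by positivity
  have hB0 : B ≠ 0 := by positivity
  field_simp

/-- Density of the smooth part after the radial map. -/
def q2 (k₂ : ℕ) (σ2 α : ℝ) (m w : Fin k₂ → ℝ) : ℝ :=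
  (2 * π * σ2) ^ (-(k₂ : ℝ) / 2) *
    (qrad k₂ σ2 α (gfun (Real.exp (2 * α * k₂)) (σ2 / α) (enorm2 w)) *
    Real.exp (-(enorm2 (gdir (Real.exp (2 * α * k₂)) (σ2 / α) w - m)) ^ 2 / (2 * σ2)))

lemma qrad_continuous (k₂ : ℕ) {σ2 α : ℝ} (hσ : 0 < σ2) (hα : 0 < α) :
    Continuous (qrad k₂ σ2 α) := by
  unfold qrad
  refine Continuous.mul (by fun_prop) (Continuous.inv₀ ?_ ?_)
  · refine Continuous.add continuous_const (Continuous.mul (by fun_prop) (Continuous.inv₀ (by fun_prop) ?_))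
    intro x; positivity
  · intro x; positivity

lemma qrad_nonneg (k₂ : ℕ) {σ2 α : ℝ} (hσ : 0 < σ2) (hα : 0 < α) (G : ℝ) :
    0 ≤ qrad k₂ σ2 α G := by
  unfold qrad
  positivity

lemma q2_measurable (k₂ : ℕ) {σ2 α : ℝ} (hσ : 0 < σ2) (hα : 0 < α) (m : Fin k₂ → ℝ) :
    Measurable (q2 k₂ σ2 α m) := by
  have hb : 0 < σ2 / α := by positivity
  have h1 := qrad_continuous k₂ hσ hα
  have h2 := gfun_continuous (Real.exp_pos (2 * α * k₂)) hb
  have h3 := gdir_continuous (ι := Fin k₂) (Real.exp_pos (2 * α * k₂)) hb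
  have h4 := enorm2_continuous (ι := Fin k₂)
  apply Continuous.measurable
  unfold q2
  fun_prop

lemma map_shift_Hmap (k₂ : ℕ) {σ2 α : ℝ} (hσ : 0 < σ2) (hα : 0 < α) (m : Fin k₂ → ℝ) :
    (gaussPi (Fin k₂) σ2).map (fun z => Hmap (Real.exp (2 * α * k₂)) (σ2 / α) (z + m)) =
      volume.withDensity (fun w => ENNReal.ofReal (q2 k₂ σ2 α m w)) := by
  have hb : 0 < σ2 / α := by positivity
  have ha := Real.exp_pos (2 * α * k₂)
  have hH := (Hmap_continuous (ι := Fin k₂) (b := σ2 / α) ha).measurable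
  have : (fun z => Hmap (Real.exp (2 * α * k₂)) (σ2 / α) (z + m)) =
    (Hmap (Real.exp (2 * α * k₂)) (σ2 / α)) ∘ (fun z => z + m) := rfl
  rw [this, ← Measure.map_map hH (by fun_prop), gaussPi_map_add]
  apply map_Hmap ha hb
  · exact (q2_measurable k₂ hσ hα m).ennreal_ofReal
  · intro z
    have hJ : 0 ≤ Jfun (Real.exp (2 * α * k₂)) (σ2 / α) z := by
      unfold Jfun; positivity
    rw [← ENNReal.ofReal_mul hJ]
    congr 1
    unfold q2
    rw [gfun_Hmap ha hb, gdir_Hmap ha hb, Fintype.card_fin]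
    have := Jfun_qrad (k₂ := k₂) hσ hα z
    linear_combination (-((2 * π * σ2) ^ (-(k₂ : ℝ) / 2)) *
      Real.exp (-(enorm2 (z - m)) ^ 2 / (2 * σ2))) * this

lemma enorm2_sq_sum {l m : Type*} [Fintype l] [Fintype m] (t : l ⊕ m → ℝ) :
    enorm2 t ^ 2 = enorm2 (t ∘ Sum.inl) ^ 2 + enorm2 (t ∘ Sum.inr) ^ 2 := by
  simp [enorm2_sq, Fintype.sum_sum_type]

/-- Affine change of variables for densities. -/
lemma map_affine_density {κ : Type*} [Fintype κ] [DecidableEq κ] (M : Matrix κ κ ℝ)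
    (hM : M.det ≠ 0) (c : κ → ℝ) (p : (κ → ℝ) → ℝ) (hp : Measurable p) :
    (volume.withDensity (fun t => ENNReal.ofReal (|M.det| * p (M.mulVec t + c)))).map
      (fun t => M.mulVec t + c) = volume.withDensity (fun z => ENNReal.ofReal (p z)) := by
  have hmeas : Measurable (fun t : κ → ℝ => M.mulVec t + c) :=
    (Continuous.add (Continuous.matrix_mulVec continuous_const continuous_id)
      continuous_const).measurable
  have hmeas0 : Measurable (fun t : κ → ℝ => M.mulVec t) :=
    (Continuous.matrix_mulVec continuous_const continuous_id).measurable
  have h := map_withDensity_comp (volume : Measure (κ → ℝ)) (fun t => M.mulVec t + c) hmeas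
    (fun z => ENNReal.ofReal (|M.det| * p z)) (by fun_prop)
  have hv : (volume : Measure (κ → ℝ)).map (fun t => M.mulVec t + c) =
      ENNReal.ofReal |M.det⁻¹| • volume := by
    have h1 := Real.map_matrix_volume_pi_eq_smul_volume_pi hM
    have h2 : (fun t : κ → ℝ => M.mulVec t + c) = (fun z => z + c) ∘ (Matrix.toLin' M) := by
      ext t; simp
    rw [h2, ← Measure.map_map (by fun_prop) (by exact hmeas0), h1, Measure.map_smul,
      map_add_right_eq_self]
  rw [h, hv, withDensity_smul_measure, ← withDensity_smul _ (by fun_prop)]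
  congr 1
  ext z
  rw [Pi.smul_apply, smul_eq_mul, ← ENNReal.ofReal_mul (by positivity), ← mul_assoc, ← abs_mul,
    inv_mul_cancel₀ hM, abs_one, one_mul]

variable {k₁ k₂ : ℕ} {Q : Matrix (Fin k₁ ⊕ Fin k₂) (Fin k₁ ⊕ Fin k₂) ℝ}

/-- The linear part of the change of variables. -/
def Mtr (Q : Matrix (Fin k₁ ⊕ Fin k₂) (Fin k₁ ⊕ Fin k₂) ℝ) :
    Matrix (Fin k₁ ⊕ Fin k₂) (Fin k₁ ⊕ Fin k₂) ℝ :=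
  fromBlocks (msqrt Q.toBlocks₁₁) (msqrt Q.toBlocks₁₁ * (Q.toBlocks₁₁⁻¹ * Q.toBlocks₁₂)) 0
    (msqrt (Sch Q))

lemma Mtr_det_ne (hQ : Q.PosDef) : (Mtr Q).det ≠ 0 := by
  unfold Mtr
  rw [Matrix.det_fromBlocks_zero₂₁]
  exact mul_ne_zero (msqrt_det_ne (Q11_posDef hQ)) (msqrt_det_ne (Sch_posDef hQ))

lemma Mtr_det_abs (hQ : Q.PosDef) : Real.sqrt Q.det = |(Mtr Q).det| := by
  rw [← Real.sqrt_sq_eq_abs]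
  congr 1
  unfold Mtr
  rw [Matrix.det_fromBlocks_zero₂₁, mul_pow, msqrt_det_sq (Q11_posDef hQ).posSemidef,
    msqrt_det_sq (Sch_posDef hQ).posSemidef, det_eq_Sch hQ]

lemma Mtr_inl (t : Fin k₁ ⊕ Fin k₂ → ℝ) : ((Mtr Q).mulVec t) ∘ Sum.inl =
    (msqrt Q.toBlocks₁₁).mulVec
        (t ∘ Sum.inl + (Q.toBlocks₁₁⁻¹ * Q.toBlocks₁₂).mulVec (t ∘ Sum.inr)) := by
  unfold Mtr
  rw [fromBlocks_mulVec, Sum.elim_comp_inl, Matrix.mulVec_add, Matrix.mulVec_mulVec]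

lemma Mtr_inr (t : Fin k₁ ⊕ Fin k₂ → ℝ) : ((Mtr Q).mulVec t) ∘ Sum.inr =
    (msqrt (Sch Q)).mulVec (t ∘ Sum.inr) := by
  unfold Mtr
  rw [fromBlocks_mulVec, Sum.elim_comp_inr, Matrix.zero_mulVec, zero_add]

lemma sum_withDensity (p1 : (Fin k₁ → ℝ) → ℝ) (p2 : (Fin k₂ → ℝ) → ℝ) (h1 : Measurable p1)
    (h2 : Measurable p2) (h1' : ∀ y, 0 ≤ p1 y) :
    (volume.withDensity (fun z : Fin k₁ ⊕ Fin k₂ → ℝ =>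
      ENNReal.ofReal (p1 (z ∘ Sum.inl) * p2 (z ∘ Sum.inr)))).map
        (fun z => (z ∘ Sum.inl, z ∘ Sum.inr)) =
    (volume.withDensity (fun y => ENNReal.ofReal (p1 y))).prod
      (volume.withDensity (fun y => ENNReal.ofReal (p2 y))) := by
  have hm := volume_measurePreserving_sumPiEquivProdPi (fun _ : Fin k₁ ⊕ Fin k₂ => ℝ)
  have he : (⇑(MeasurableEquiv.sumPiEquivProdPi (fun _ : Fin k₁ ⊕ Fin k₂ => ℝ))) =
    (fun z => (z ∘ Sum.inl, z ∘ Sum.inr)) := rfl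
  rw [he] at hm
  have h := map_withDensity_comp (volume : Measure (Fin k₁ ⊕ Fin k₂ → ℝ)) _ hm.measurable
    (fun y => ENNReal.ofReal (p1 y.1 * p2 y.2)) (by fun_prop)
  rw [h, hm.map_eq, prod_withDensity (by fun_prop) (by fun_prop)]
  simp only [ENNReal.ofReal_mul (h1' _)]
  rfl

lemma rpow_split (k₁ k₂ : ℕ) {c : ℝ} (hc : 0 < c) : c ^ (-((k₁ : ℝ) + k₂) / 2) =
    c ^ (-(k₁ : ℝ) / 2) * c ^ (-(k₂ : ℝ) / 2) := by
  rw [← Real.rpow_add hc]; congr 1; ring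

lemma limitLaw_eq (hQ : Q.PosDef) {σ2 α : ℝ} (hσ : 0 < σ2) (hα : 0 < α) (γ : Fin k₂ → ℝ) [SFinite (gaussPi (Fin k₁) σ2)] [SFinite (gaussPi (Fin k₂) σ2)] :
    limitLaw Q σ2 α γ = volume.withDensity (fun t => ENNReal.ofReal (fInfty Q σ2 α γ t)) := by
  have hb : 0 < σ2 / α := by positivity
  have ha := Real.exp_pos (2 * α * k₂)
  have hH := (Hmap_continuous (ι := Fin k₂) (b := σ2 / α) ha).measurable
  set a := Real.exp (2 * α * k₂) with ha'
  set b := σ2 / α with hb'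
  set A := msqrt Q.toBlocks₁₁ with hA
  set S := msqrt (Sch Q) with hS
  set C := Q.toBlocks₁₁⁻¹ * Q.toBlocks₁₂ with hC
  set m := S.mulVec γ with hm
  have hAi : A⁻¹ * A = 1 := Matrix.nonsing_inv_mul _ (msqrt_det_ne (Q11_posDef hQ)).isUnit
  have hSi : S⁻¹ * S = 1 := Matrix.nonsing_inv_mul _ (msqrt_det_ne (Sch_posDef hQ)).isUnit
  let Ψ : (Fin k₁ → ℝ) × (Fin k₂ → ℝ) → (Fin k₁ ⊕ Fin k₂ → ℝ) := fun z =>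
    Sum.elim (A⁻¹.mulVec z.1 - C.mulVec (S⁻¹.mulVec z.2 - γ)) (S⁻¹.mulVec z.2 - γ)
  let p1 : (Fin k₁ → ℝ) → ℝ := fun y =>
    (2 * π * σ2) ^ (-(Fintype.card (Fin k₁) : ℝ) / 2) * Real.exp (-(enorm2 y) ^ 2 / (2 * σ2))
  have hp1 : Measurable p1 := by
    have := enorm2_measurable (ι := Fin k₁)
    fun_prop
  have hp1' : ∀ y, 0 ≤ p1 y := fun y => by positivity
  have hp2 := q2_measurable k₂ hσ hα m
  let c : Fin k₁ ⊕ Fin k₂ → ℝ := Sum.elim 0 m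
  have hΨ : Measurable Ψ := by
    apply Continuous.measurable
    apply continuous_pi
    rintro (i | i)
    · exact (continuous_apply i).comp
        ((Continuous.matrix_mulVec continuous_const continuous_fst).sub
          (Continuous.matrix_mulVec continuous_const
            ((Continuous.matrix_mulVec continuous_const continuous_snd).sub continuous_const)))
    · exact (continuous_apply i).comp
        ((Continuous.matrix_mulVec continuous_const continuous_snd).sub continuous_const)
  have hmeas : Measurable (fun t : Fin k₁ ⊕ Fin k₂ → ℝ => (Mtr Q).mulVec t + c) :=
    (Continuous.add (Continuous.matrix_mulVec continuous_const continuous_id)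
      continuous_const).measurable
  have hsp : Measurable (fun z : Fin k₁ ⊕ Fin k₂ → ℝ => (z ∘ Sum.inl, z ∘ Sum.inr)) := by
    unfold Function.comp
    fun_prop
  have hi1 : ∀ t, ((Mtr Q).mulVec t + c) ∘ Sum.inl =
      A.mulVec (t ∘ Sum.inl + C.mulVec (t ∘ Sum.inr)) := by
    intro t
    rw [← Mtr_inl]; ext i; simp [c]
  have hi2 : ∀ t, ((Mtr Q).mulVec t + c) ∘ Sum.inr = S.mulVec (t ∘ Sum.inr + γ) := by
    intro t
    rw [Matrix.mulVec_add, ← Mtr_inr]; ext i; simp [c, hm]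
  have hdens : ∀ t, fInfty Q σ2 α γ t = |(Mtr Q).det| *
      (p1 (((Mtr Q).mulVec t + c) ∘ Sum.inl) *
        q2 k₂ σ2 α m (((Mtr Q).mulVec t + c) ∘ Sum.inr)) := by
    intro t
    rw [hi1, hi2, fInfty_eq_Fgen hQ, Fgen, Mtr_det_abs hQ, rpow_split _ _ (by positivity)]
    simp only [p1, q2, Fintype.card_fin]
    ring
  have hF : limitLaw Q σ2 α γ = (((gaussPi (Fin k₁) σ2).prod
      ((gaussPi (Fin k₂) σ2).map (fun z => Hmap a b (z + m))))).map Ψ := by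
    have := Measure.map_prod_map (gaussPi (Fin k₁) σ2) (gaussPi (Fin k₂) σ2) measurable_id
      (hH.comp (measurable_id.add_const m))
    rw [Measure.map_id] at this
    erw [this]
    rw [Measure.map_map hΨ (by fun_prop)]
    unfold limitLaw
    congr 1
    funext Z
    change _ + _ + (1 + a * Real.exp (-α * (enorm2 (Z.2 + m)) ^ 2 / σ2))⁻¹ • _ =
      Ψ (Z.1, Hmap a b (Z.2 + m))
    set L := (1 + a * Real.exp (-α * (enorm2 (Z.2 + m)) ^ 2 / σ2))⁻¹ with hL
    have hLe : Hmap a b (Z.2 + m) = L • (Z.2 + m) := by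
      rw [Hmap, ← enorm2_sq, hL, hb']
      congr 5
      field_simp
    have hx : S⁻¹.mulVec (L • (Z.2 + m)) = L • (S⁻¹.mulVec Z.2 + γ) := by
      rw [Matrix.mulVec_smul, Matrix.mulVec_add, hm, Matrix.mulVec_mulVec, hSi, Matrix.one_mulVec]
    simp only [Ψ]
    rw [hLe, hx, Matrix.mulVec_sub, Matrix.mulVec_smul, Matrix.mulVec_add]
    change (fromRows C (-1)).mulVec γ + (fromRows A⁻¹ 0).mulVec Z.1 +
      L • ((fromRows (-(C * S⁻¹)) S⁻¹).mulVec Z.2 - (fromRows C (-1)).mulVec γ) = _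
    simp only [Matrix.fromRows_mulVec]
    rw [Matrix.neg_mulVec, Matrix.neg_mulVec, ← Matrix.mulVec_mulVec Z.2 C S⁻¹, Matrix.zero_mulVec,
      Matrix.one_mulVec]
    ext i
    rcases i with i | i
    · simp only [Pi.add_apply, Pi.sub_apply, Pi.smul_apply, Sum.elim_inl, smul_eq_mul, Pi.neg_apply]
      ring
    · simp only [Pi.add_apply, Pi.sub_apply, Pi.smul_apply, Sum.elim_inr, smul_eq_mul, Pi.neg_apply,
        Pi.zero_apply]
      ring
  rw [hF, map_shift_Hmap k₂ hσ hα m]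
  have hg : gaussPi (Fin k₁) σ2 = volume.withDensity (fun y => ENNReal.ofReal (p1 y)) := rfl
  rw [hg, ← sum_withDensity p1 _ hp1 hp2 hp1', ← map_affine_density (Mtr Q) (Mtr_det_ne hQ) c
    (fun z => p1 (z ∘ Sum.inl) * q2 k₂ σ2 α m (z ∘ Sum.inr)) (by unfold Function.comp; fun_prop),
    Measure.map_map hΨ hsp, Measure.map_map (hΨ.comp hsp) hmeas]
  simp only [← hdens]
  convert Measure.map_id
  funext t
  change Ψ (((Mtr Q).mulVec t + c) ∘ Sum.inl, ((Mtr Q).mulVec t + c) ∘ Sum.inr) = t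
  rw [hi1, hi2]
  simp only [Ψ]
  rw [Matrix.mulVec_mulVec, Matrix.mulVec_mulVec, hAi, hSi, Matrix.one_mulVec, Matrix.one_mulVec,
    add_sub_cancel_right, add_sub_cancel_right, Sum.elim_comp_inl_inr]

lemma gaussCov_univ {κ : Type*} [Fintype κ] [DecidableEq κ] {R : Matrix κ κ ℝ} (hR : R.PosDef)
    {σ : ℝ} (hσ : 0 < σ) : gaussCov (σ ^ 2) R Set.univ = 1 := by
  have : Fact (0 < σ) := ⟨hσ⟩
  have hm := enorm2_measurable (ι := κ)
  have h := map_affine_density (msqrt R) (msqrt_det_ne hR) 0 (fun x =>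
    (2 * π * σ ^ 2) ^ (-(Fintype.card κ : ℝ) / 2) * Real.exp (-(enorm2 x) ^ 2 / (2 * σ ^ 2)))
    (by fun_prop)
  have e : (fun t => ENNReal.ofReal (|(msqrt R).det| * ((2 * π * σ ^ 2) ^ (-(Fintype.card κ : ℝ) / 2) *
      Real.exp (-(enorm2 ((msqrt R).mulVec t + 0)) ^ 2 / (2 * σ ^ 2))))) =
      fun t => ENNReal.ofReal (gaussCovDens (σ ^ 2) R t) := by
    funext t
    have hs := msqrt_spec hR.posSemidef
    rw [add_zero, enorm2_mulVec _ R (by rw [hs.1, hs.2]), gaussCovDens, ← Real.sqrt_sq_eq_abs,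
      msqrt_det_sq hR.posSemidef]
    congr 1
    ring
  rw [e] at h
  have hmeas : Measurable (fun t : κ → ℝ => (msqrt R).mulVec t + 0) :=
    (Continuous.add (Continuous.matrix_mulVec continuous_const continuous_id)
      continuous_const).measurable
  have h2 := congrArg (fun μ => μ Set.univ) h
  rw [Measure.map_apply hmeas MeasurableSet.univ, Set.preimage_univ] at h2
  have h3 : gaussPi κ (σ ^ 2) Set.univ = 1 := measure_univ
  rw [gaussCov, h2, ← h3]
  rfl

lemma limitLaw_prob (Q : Matrix (Fin k₁ ⊕ Fin k₂) (Fin k₁ ⊕ Fin k₂) ℝ) {σ α : ℝ} (hσ : 0 < σ)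
    (γ : Fin k₂ → ℝ) : IsProbabilityMeasure (limitLaw Q (σ ^ 2) α γ) := by
  have : Fact (0 < σ) := ⟨hσ⟩
  unfold limitLaw
  apply Measure.isProbabilityMeasure_map
  apply Continuous.aemeasurable
  have := enorm2_continuous (ι := Fin k₂)
  refine Continuous.add (Continuous.add continuous_const
    (Continuous.matrix_mulVec continuous_const continuous_fst)) (Continuous.smul (M := ℝ)
    (Continuous.inv₀ ?_ ?_) (Continuous.sub
    (Continuous.matrix_mulVec continuous_const continuous_snd) continuous_const))
  · fun_prop
  · intro Z
    positivity

lemma limitLaw_density (hQ : Q.PosDef) {σ α : ℝ} (hσ : 0 < σ) (hα : 0 < α) (γ : Fin k₂ → ℝ) :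
    limitLaw Q (σ ^ 2) α γ =
      volume.withDensity (fun t => ENNReal.ofReal (fq Q (σ ^ 2) α γ t)) := by
  have : Fact (0 < σ) := ⟨hσ⟩
  rw [limitLaw_eq hQ (by positivity) hα]
  simp only [fInfty_eq_fq hQ (show 0 < σ ^ 2 by positivity) hα]

end lim

section finlaw

variable {n k₁ k₂ : ℕ} {X : Matrix (Fin n) (Fin k₁ ⊕ Fin k₂) ℝ}

/-- Coefficient of the auxiliary regression. -/
def Cf (X : Matrix (Fin n) (Fin k₁ ⊕ Fin k₂) ℝ) : Matrix (Fin k₁) (Fin k₂) ℝ :=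
  (Qn X).toBlocks₁₁⁻¹ * (Qn X).toBlocks₁₂

/-- Second block of the unrestricted estimator. -/
def e2f (X : Matrix (Fin n) (Fin k₁ ⊕ Fin k₂) ℝ) (Y : Fin n → ℝ) : Fin k₂ → ℝ :=
  ((X2 X)ᵀ * (1 - projR X) * X2 X)⁻¹.mulVec (((X2 X)ᵀ * (1 - projR X)).mulVec Y)

/-- First block of the restricted estimator. -/
def e1f (X : Matrix (Fin n) (Fin k₁ ⊕ Fin k₂) ℝ) (Y : Fin n → ℝ) : Fin k₁ → ℝ :=
  ((X1 X)ᵀ * X1 X)⁻¹.mulVec ((X1 X)ᵀ.mulVec Y)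

lemma X_blocks : X = fromCols (X1 X) (X2 X) := (fromCols_toCols X).symm

lemma projR_symm : (projR X)ᵀ = projR X := by
  unfold projR
  simp only [Matrix.transpose_mul, Matrix.transpose_transpose, Matrix.transpose_nonsing_inv,
    Matrix.mul_assoc]

lemma X1_proj (hX : X.rank = k₁ + k₂) : (X1 X)ᵀ * (1 - projR X) = 0 := by
  unfold projR
  rw [Matrix.mul_sub, Matrix.mul_one, ← Matrix.mul_assoc, ← Matrix.mul_assoc,
    Matrix.mul_nonsing_inv _ (det_isUnit_of_posDef (gram11_posDef hX)), Matrix.one_mul, sub_self]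

lemma proj_X1 (hX : X.rank = k₁ + k₂) : (1 - projR X) * X1 X = 0 := by
  have := congrArg Matrix.transpose (X1_proj hX)
  rwa [Matrix.transpose_mul, Matrix.transpose_sub, projR_symm, Matrix.transpose_transpose,
    Matrix.transpose_one, Matrix.transpose_zero] at this

lemma proj_idem (hX : X.rank = k₁ + k₂) : (1 - projR X) * (1 - projR X) = 1 - projR X := by
  conv_lhs => rw [Matrix.mul_sub, Matrix.mul_one]
  unfold projR
  rw [← Matrix.mul_assoc, ← Matrix.mul_assoc]
  have := proj_X1 hX
  unfold projR at this
  rw [this]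
  simp

lemma gram_mulVec (t : Fin k₁ ⊕ Fin k₂ → ℝ) : X.mulVec t =
    (X1 X).mulVec (t ∘ Sum.inl) + (X2 X).mulVec (t ∘ Sum.inr) := by
  conv_lhs => rw [X_blocks (X := X)]
  rw [fromCols_mulVec]

lemma e2f_X (hn : 0 < n) (hX : X.rank = k₁ + k₂) (β : Fin k₁ ⊕ Fin k₂ → ℝ) :
    e2f X (X.mulVec β) = β ∘ Sum.inr := by
  unfold e2f
  rw [gram_mulVec, Matrix.mulVec_add, Matrix.mulVec_mulVec, Matrix.mulVec_mulVec,
    Matrix.mul_assoc _ _ (X1 X), proj_X1 hX, Matrix.mul_zero, Matrix.zero_mulVec, zero_add,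
    Matrix.mulVec_mulVec, Matrix.nonsing_inv_mul _ (det_isUnit_of_posDef (S_posDef hn hX)),
    Matrix.one_mulVec]

lemma e1f_X (hn : 0 < n) (hX : X.rank = k₁ + k₂) (β : Fin k₁ ⊕ Fin k₂ → ℝ) :
    e1f X (X.mulVec β) = β ∘ Sum.inl + (Cf X).mulVec (β ∘ Sum.inr) := by
  unfold e1f Cf
  rw [Qn_coef hn hX, gram_mulVec, Matrix.mulVec_add, Matrix.mulVec_mulVec, Matrix.mulVec_mulVec,
    Matrix.mulVec_add, Matrix.mulVec_mulVec, Matrix.mulVec_mulVec,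
    Matrix.nonsing_inv_mul _ (det_isUnit_of_posDef (gram11_posDef hX)),
    Matrix.one_mulVec]

lemma e1f_add (Y u : Fin n → ℝ) : e1f X (Y + u) = e1f X Y + e1f X u := by
  unfold e1f; rw [Matrix.mulVec_add, Matrix.mulVec_add]

lemma e2f_add (Y u : Fin n → ℝ) : e2f X (Y + u) = e2f X Y + e2f X u := by
  unfold e2f; rw [Matrix.mulVec_add, Matrix.mulVec_add]

lemma betaU_eq (hn : 0 < n) (hX : X.rank = k₁ + k₂) (Y : Fin n → ℝ) :
    betaU X Y = Sum.elim (e1f X Y - (Cf X).mulVec (e2f X Y)) (e2f X Y) := by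
  have hu := det_isUnit_of_posDef (gram_posDef hX)
  set v : Fin k₁ ⊕ Fin k₂ → ℝ := Sum.elim (e1f X Y - (Cf X).mulVec (e2f X Y)) (e2f X Y) with hv
  suffices h : (Xᵀ * X).mulVec v = Xᵀ.mulVec Y by
    unfold betaU
    rw [← h, Matrix.mulVec_mulVec, Matrix.nonsing_inv_mul _ hu, Matrix.one_mulVec]
  have hG := Matrix.mul_nonsing_inv _ (det_isUnit_of_posDef (gram11_posDef hX))
  have h1 : X.mulVec v = (projR X).mulVec Y + ((1 - projR X) * X2 X).mulVec (e2f X Y) := by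
    rw [gram_mulVec, hv, Sum.elim_comp_inl, Sum.elim_comp_inr, Matrix.mulVec_sub]
    unfold e1f Cf
    rw [Qn_coef hn hX, Matrix.sub_mul, Matrix.sub_mulVec, Matrix.one_mul]
    unfold projR
    simp only [Matrix.mulVec_mulVec, Matrix.mul_assoc]
    abel
  rw [← Matrix.mulVec_mulVec, h1]
  have hXt : Xᵀ = fromRows (X1 X)ᵀ (X2 X)ᵀ := by
    conv_lhs => rw [X_blocks (X := X)]
    rw [transpose_fromCols]
  rw [hXt, fromRows_mulVec, fromRows_mulVec]
  congr 1
  · rw [Matrix.mulVec_add, Matrix.mulVec_mulVec, Matrix.mulVec_mulVec, ← Matrix.mul_assoc _ _ (X2 X),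
      X1_proj hX, Matrix.zero_mul, Matrix.zero_mulVec, add_zero]
    have := X1_proj hX
    rw [Matrix.mul_sub, Matrix.mul_one, sub_eq_zero] at this
    rw [← this]
  · unfold e2f
    rw [Matrix.mulVec_add, Matrix.mulVec_mulVec, Matrix.mulVec_mulVec, ← Matrix.mul_assoc _ _ (X2 X),
      Matrix.mulVec_mulVec, Matrix.mul_nonsing_inv _ (det_isUnit_of_posDef (S_posDef hn hX)),
      Matrix.one_mulVec, Matrix.mul_sub, Matrix.sub_mulVec, Matrix.mul_one]
    abel

lemma betaR_eq (Y : Fin n → ℝ) : betaR X Y = Sum.elim (e1f X Y) (fun _ => 0) := rfl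

lemma gram_quad (hn : 0 < n) (hX : X.rank = k₁ + k₂) (t : Fin k₁ ⊕ Fin k₂ → ℝ) :
    t ⬝ᵥ (Xᵀ * X).mulVec t = n * (
      (t ∘ Sum.inl + (Cf X).mulVec (t ∘ Sum.inr)) ⬝ᵥ
        (Qn X).toBlocks₁₁.mulVec (t ∘ Sum.inl + (Cf X).mulVec (t ∘ Sum.inr)) +
      (t ∘ Sum.inr) ⬝ᵥ (Sch (Qn X)).mulVec (t ∘ Sum.inr)) := by
  have := quad_decomp (Qn_posDef hn hX) t
  unfold Cf
  rw [← this]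
  unfold Qn
  rw [Matrix.smul_mulVec, dotProduct_smul, smul_eq_mul, mul_inv_cancel_left₀]
  positivity

lemma r_diff (hn : 0 < n) (hX : X.rank = k₁ + k₂) (σ2 : ℝ) (Y : Fin n → ℝ) :
    rR X σ2 Y - rU X σ2 Y =
      enorm2 ((msqrt (Sch (Qn X))).mulVec (Real.sqrt n • e2f X Y)) ^ 2 - 2 * σ2 * k₂ := by
  have hs := msqrt_spec (Sch_posDef (Qn_posDef hn hX)).posSemidef
  rw [enorm2_mulVec _ (Sch (Qn X)) (by rw [hs.1, hs.2])]
  unfold rR rU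
  rw [gram_quad hn hX, gram_quad hn hX, betaU_eq hn hX, betaR_eq]
  simp only [Sum.elim_comp_inl, Sum.elim_comp_inr, sub_add_cancel]
  have h0 : (fun _ : Fin k₂ => (0 : ℝ)) = 0 := rfl
  rw [h0, Matrix.mulVec_zero, Matrix.mulVec_zero, dotProduct_zero, add_zero, Matrix.mulVec_smul,
    dotProduct_smul, smul_dotProduct, smul_eq_mul, smul_eq_mul, ← mul_assoc,
    Real.mul_self_sqrt (by positivity)]
  ring

lemma lamHat_eq (hn : 0 < n) (hX : X.rank = k₁ + k₂) {σ2 : ℝ} (hσ : 0 < σ2) (α : ℝ)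
    (Y : Fin n → ℝ) : 1 - lamHat α σ2 X Y =
      (1 + Real.exp (2 * α * k₂) * Real.exp (-α *
        enorm2 ((msqrt (Sch (Qn X))).mulVec (Real.sqrt n • e2f X Y)) ^ 2 / σ2))⁻¹ := by
  have h := r_diff hn hX σ2 Y
  set D := enorm2 ((msqrt (Sch (Qn X))).mulVec (Real.sqrt n • e2f X Y)) ^ 2
  unfold lamHat
  have h1 : rR X σ2 Y = rU X σ2 Y + (D - 2 * σ2 * k₂) := by linarith
  have h2 : Real.exp (-(α * rR X σ2 Y) / σ2) = Real.exp (-(α * rU X σ2 Y) / σ2) *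
      (Real.exp (2 * α * k₂) * Real.exp (-α * D / σ2)) := by
    rw [← Real.exp_add, ← Real.exp_add, h1]
    congr 1
    field_simp
    ring
  rw [h2]
  have hE := Real.exp_pos (-(α * rU X σ2 Y) / σ2)
  have hP : 0 < Real.exp (2 * α * k₂) * Real.exp (-α * D / σ2) := by positivity
  generalize Real.exp (-(α * rU X σ2 Y) / σ2) = E at *
  generalize Real.exp (2 * α * k₂) * Real.exp (-α * D / σ2) = P at *
  have : E * P + E ≠ 0 := by positivity
  field_simp
  ring

/-- Matrix producing the first standardised block. -/
def Am (X : Matrix (Fin n) (Fin k₁ ⊕ Fin k₂) ℝ) : Matrix (Fin k₁) (Fin n) ℝ :=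
  (Real.sqrt n)⁻¹ • ((msqrt (Qn X).toBlocks₁₁)⁻¹ * (X1 X)ᵀ)

/-- Matrix producing the second standardised block. -/
def Bm (X : Matrix (Fin n) (Fin k₁ ⊕ Fin k₂) ℝ) : Matrix (Fin k₂) (Fin n) ℝ :=
  (Real.sqrt n)⁻¹ • ((msqrt (Sch (Qn X)))⁻¹ * ((X2 X)ᵀ * (1 - projR X)))

lemma inv_sandwich {ι : Type*} [Fintype ι] [DecidableEq ι] {R : Matrix ι ι ℝ} (hR : R.PosDef) :
    (msqrt R)⁻¹ * R * (msqrt R)⁻¹ = 1 := by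
  have hs := msqrt_spec hR.posSemidef
  have hu := (msqrt_det_ne hR).isUnit
  have h : (msqrt R)⁻¹ * R = msqrt R := by
    calc (msqrt R)⁻¹ * R = (msqrt R)⁻¹ * (msqrt R * msqrt R) := by rw [hs.2]
      _ = msqrt R := by rw [← Matrix.mul_assoc, Matrix.nonsing_inv_mul _ hu, Matrix.one_mul]
  rw [h, Matrix.mul_nonsing_inv _ hu]

lemma msqrt_inv_sq {ι : Type*} [Fintype ι] [DecidableEq ι] {R : Matrix ι ι ℝ} (hR : R.PosDef) :
    (msqrt R)⁻¹ * (msqrt R)⁻¹ = R⁻¹ := by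
  have hs := msqrt_spec hR.posSemidef
  rw [← Matrix.mul_inv_rev, hs.2]

lemma msqrt_inv_symm {ι : Type*} [Fintype ι] [DecidableEq ι] {R : Matrix ι ι ℝ} (hR : R.PosDef) :
    ((msqrt R)⁻¹)ᵀ = (msqrt R)⁻¹ := by
  rw [Matrix.transpose_nonsing_inv, (msqrt_spec hR.posSemidef).1]

lemma sqrt_inv_sq (n : ℕ) : (Real.sqrt n)⁻¹ * (Real.sqrt n)⁻¹ = (n : ℝ)⁻¹ := by
  rw [← mul_inv, Real.mul_self_sqrt (by positivity)]

lemma Am_orth (hn : 0 < n) (hX : X.rank = k₁ + k₂) : Am X * (Am X)ᵀ = 1 := by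
  have hR := Q11_posDef (Qn_posDef hn hX)
  unfold Am
  rw [Matrix.transpose_smul, Matrix.smul_mul, Matrix.mul_smul, smul_smul, sqrt_inv_sq,
    Matrix.transpose_mul, msqrt_inv_symm hR, Matrix.transpose_transpose]
  have := inv_sandwich hR
  conv_rhs => rw [← this]
  conv_rhs => rw [Matrix.mul_assoc]; arg 2; arg 1; rw [Qn11]
  rw [Matrix.smul_mul, Matrix.mul_smul]
  simp only [Matrix.mul_assoc]

lemma Bm_orth (hn : 0 < n) (hX : X.rank = k₁ + k₂) : Bm X * (Bm X)ᵀ = 1 := by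
  have hR := Sch_posDef (Qn_posDef hn hX)
  unfold Bm
  rw [Matrix.transpose_smul, Matrix.smul_mul, Matrix.mul_smul, smul_smul, sqrt_inv_sq,
    Matrix.transpose_mul, msqrt_inv_symm hR, Matrix.transpose_mul, Matrix.transpose_transpose,
    Matrix.transpose_sub, projR_symm, Matrix.transpose_one]
  have := inv_sandwich hR
  conv_rhs => rw [← this]
  conv_rhs => rw [Matrix.mul_assoc]; arg 2; arg 1; rw [Sch_Qn hn hX, ← proj_idem hX]
  rw [Matrix.smul_mul, Matrix.mul_smul]
  simp only [Matrix.mul_assoc]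

lemma AmBm_orth (hn : 0 < n) (hX : X.rank = k₁ + k₂) : Am X * (Bm X)ᵀ = 0 := by
  have hR := Sch_posDef (Qn_posDef hn hX)
  unfold Am Bm
  rw [Matrix.transpose_smul, Matrix.smul_mul, Matrix.mul_smul, smul_smul, sqrt_inv_sq,
    Matrix.transpose_mul, msqrt_inv_symm hR, Matrix.transpose_mul, Matrix.transpose_transpose,
    Matrix.transpose_sub, projR_symm, Matrix.transpose_one]
  have : (msqrt (Qn X).toBlocks₁₁)⁻¹ * (X1 X)ᵀ * ((1 - projR X) * X2 X * (msqrt (Sch (Qn X)))⁻¹) =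
    (msqrt (Qn X).toBlocks₁₁)⁻¹ * ((X1 X)ᵀ * (1 - projR X)) * X2 X * (msqrt (Sch (Qn X)))⁻¹ := by
    simp only [Matrix.mul_assoc]
  rw [this, X1_proj hX]
  simp

lemma Am_mulVec (hn : 0 < n) (hX : X.rank = k₁ + k₂) (u : Fin n → ℝ) :
    (msqrt (Qn X).toBlocks₁₁)⁻¹.mulVec ((Am X).mulVec u) = Real.sqrt n • e1f X u := by
  have hR := Q11_posDef (Qn_posDef hn hX)
  have h0 : (0 : ℝ) < Real.sqrt n := by positivity
  unfold Am e1f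
  rw [Matrix.mulVec_mulVec, Matrix.mul_smul, ← Matrix.mul_assoc, msqrt_inv_sq hR, Qn11_inv hn hX,
    Matrix.smul_mul, smul_smul, Matrix.smul_mulVec, Matrix.mulVec_mulVec]
  congr 1
  rw [inv_mul_eq_div, div_sqrt]

lemma Bm_mulVec (hn : 0 < n) (hX : X.rank = k₁ + k₂) (u : Fin n → ℝ) :
    (msqrt (Sch (Qn X)))⁻¹.mulVec ((Bm X).mulVec u) = Real.sqrt n • e2f X u := by
  have hR := Sch_posDef (Qn_posDef hn hX)
  have hi : (Sch (Qn X))⁻¹ = (n : ℝ) • ((X2 X)ᵀ * (1 - projR X) * X2 X)⁻¹ := by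
    apply Matrix.inv_eq_left_inv
    rw [Sch_Qn hn hX, Matrix.smul_mul, Matrix.mul_smul, smul_smul,
      mul_inv_cancel₀ (by positivity), one_smul,
      Matrix.nonsing_inv_mul _ (det_isUnit_of_posDef (S_posDef hn hX))]
  unfold Bm e2f
  rw [Matrix.mulVec_mulVec, Matrix.mul_smul, ← Matrix.mul_assoc, msqrt_inv_sq hR, hi,
    Matrix.smul_mul, smul_smul, Matrix.smul_mulVec, Matrix.mulVec_mulVec]
  congr 1
  rw [inv_mul_eq_div, div_sqrt]

/-- The map defining the limit law. -/
def Glim (Q : Matrix (Fin k₁ ⊕ Fin k₂) (Fin k₁ ⊕ Fin k₂) ℝ) (σ2 α : ℝ)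
    (γ : Fin k₂ → ℝ) (Z : (Fin k₁ → ℝ) × (Fin k₂ → ℝ)) : (Fin k₁ ⊕ Fin k₂) → ℝ :=
  (fromRows (Q.toBlocks₁₁⁻¹ * Q.toBlocks₁₂) (-1)).mulVec γ +
    (fromRows (msqrt Q.toBlocks₁₁)⁻¹ 0).mulVec Z.1 +
    (1 + Real.exp (2 * α * k₂) *
        Real.exp (-α * (enorm2 (Z.2 + (msqrt (Sch Q)).mulVec γ)) ^ 2 / σ2))⁻¹ •
      ((fromRows (-(Q.toBlocks₁₁⁻¹ * Q.toBlocks₁₂ * (msqrt (Sch Q))⁻¹))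
          ((msqrt (Sch Q))⁻¹)).mulVec Z.2 -
        (fromRows (Q.toBlocks₁₁⁻¹ * Q.toBlocks₁₂) (-1)).mulVec γ)

lemma Glim_continuous (Q : Matrix (Fin k₁ ⊕ Fin k₂) (Fin k₁ ⊕ Fin k₂) ℝ) (σ2 α : ℝ)
    (γ : Fin k₂ → ℝ) : Continuous (Glim Q σ2 α γ) := by
  have := enorm2_continuous (ι := Fin k₂)
  unfold Glim
  refine Continuous.add (Continuous.add continuous_const
    (Continuous.matrix_mulVec continuous_const continuous_fst)) (Continuous.smul (M := ℝ)
    (Continuous.inv₀ ?_ ?_) (Continuous.sub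
    (Continuous.matrix_mulVec continuous_const continuous_snd) continuous_const))
  · fun_prop
  · intro Z
    positivity

lemma mavg_eq (hn : 0 < n) (hX : X.rank = k₁ + k₂) {σ2 : ℝ} (hσ : 0 < σ2) (α : ℝ)
    (β : Fin k₁ ⊕ Fin k₂ → ℝ) (u : Fin n → ℝ) :
    Real.sqrt n • (mavg α σ2 X (X.mulVec β + u) - β) =
      Glim (Qn X) σ2 α (Real.sqrt n • (β ∘ Sum.inr)) ((Am X).mulVec u, (Bm X).mulVec u) := by
  have hL := lamHat_eq hn hX hσ α (X.mulVec β + u)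
  have hS := (msqrt_det_ne (Sch_posDef (Qn_posDef hn hX))).isUnit
  have hZ2 : (Bm X).mulVec u = (msqrt (Sch (Qn X))).mulVec (Real.sqrt n • e2f X u) := by
    rw [← Bm_mulVec hn hX, Matrix.mulVec_mulVec, Matrix.mul_nonsing_inv _ hS, Matrix.one_mulVec]
  have harg : (Bm X).mulVec u + (msqrt (Sch (Qn X))).mulVec (Real.sqrt n • (β ∘ Sum.inr)) =
      (msqrt (Sch (Qn X))).mulVec (Real.sqrt n • e2f X (X.mulVec β + u)) := by
    rw [hZ2, ← Matrix.mulVec_add, ← smul_add, e2f_add, e2f_X hn hX, add_comm]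
  unfold Glim mavg
  simp only
  rw [harg, ← hL, betaU_eq hn hX, betaR_eq]
  set lam := lamHat α σ2 X (X.mulVec β + u)
  simp only [Matrix.fromRows_mulVec]
  rw [Matrix.neg_mulVec, Matrix.neg_mulVec, ← Matrix.mulVec_mulVec ((Bm X).mulVec u),
    Matrix.zero_mulVec, Matrix.one_mulVec, Am_mulVec hn hX, Bm_mulVec hn hX, e1f_add, e2f_add,
    e1f_X hn hX, e2f_X hn hX, Matrix.mulVec_add, Matrix.mulVec_smul, Matrix.mulVec_smul]
  change _ = Sum.elim (Real.sqrt n • (Cf X).mulVec (β ∘ Sum.inr)) _ + _ +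
    (1 - lam) • (Sum.elim (-(Real.sqrt n • (Cf X).mulVec (e2f X u))) _ -
      Sum.elim (Real.sqrt n • (Cf X).mulVec (β ∘ Sum.inr)) _)
  ext i
  rcases i with i | i
  · simp only [Pi.add_apply, Pi.sub_apply, Pi.smul_apply, Sum.elim_inl, smul_eq_mul, Pi.neg_apply,
      Function.comp_apply]
    ring
  · simp only [Pi.add_apply, Pi.sub_apply, Pi.smul_apply, Sum.elim_inr, smul_eq_mul, Pi.neg_apply,
        Pi.zero_apply, Function.comp_apply]
    ring

lemma finite_law (hn : 0 < n) (hX : X.rank = k₁ + k₂) {σ : ℝ} (hσ : 0 < σ) (α : ℝ)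
    (β : Fin k₁ ⊕ Fin k₂ → ℝ) :
    (Pmeas X β (σ ^ 2)).map (fun Y => Real.sqrt n • (mavg α (σ ^ 2) X Y - β)) =
      limitLaw (Qn X) (σ ^ 2) α (Real.sqrt n • (β ∘ Sum.inr)) := by
  have hσ2 : 0 < σ ^ 2 := by positivity
  have hG := (Glim_continuous (Qn X) (σ ^ 2) α (Real.sqrt n • (β ∘ Sum.inr))).measurable
  have hpair : Measurable (fun u : Fin n → ℝ => ((Am X).mulVec u, (Bm X).mulVec u)) :=
    ((Continuous.matrix_mulVec continuous_const continuous_id).prodMk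
      (Continuous.matrix_mulVec continuous_const continuous_id)).measurable
  have key := mavg_eq hn hX hσ2 α β
  have hf : Measurable (fun Y => Real.sqrt n • (mavg α (σ ^ 2) X Y - β)) := by
    have : (fun Y => Real.sqrt n • (mavg α (σ ^ 2) X Y - β)) =
        (Glim (Qn X) (σ ^ 2) α (Real.sqrt n • (β ∘ Sum.inr))) ∘
        (fun u : Fin n → ℝ => ((Am X).mulVec u, (Bm X).mulVec u)) ∘
        (fun Y => Y - X.mulVec β) := by
      funext Y
      simp only [Function.comp]
      rw [← key]
      simp
    rw [this]
    exact hG.comp (hpair.comp (by fun_prop))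
  unfold Pmeas
  rw [Measure.map_map hf (by fun_prop)]
  have e : (fun Y => Real.sqrt n • (mavg α (σ ^ 2) X Y - β)) ∘ (fun u => X.mulVec β + u) =
      (Glim (Qn X) (σ ^ 2) α (Real.sqrt n • (β ∘ Sum.inr))) ∘
        (fun u : Fin n → ℝ => ((Am X).mulVec u, (Bm X).mulVec u)) := by
    funext u
    exact key u
  rw [e, ← Measure.map_map hG hpair, gaussPi_map_pair (Am X) (Bm X) (Am_orth hn hX) (Bm_orth hn hX)
    (AmBm_orth hn hX) σ hσ]
  rfl

end finlaw

section ptw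

variable {k₁ k₂ : ℕ} {Q : Matrix (Fin k₁ ⊕ Fin k₂) (Fin k₁ ⊕ Fin k₂) ℝ}
  {Qs : ℕ → Matrix (Fin k₁ ⊕ Fin k₂) (Fin k₁ ⊕ Fin k₂) ℝ}

lemma tendsto_matrix_inv {ι : Type*} [Fintype ι] [DecidableEq ι] {R : Matrix ι ι ℝ}
    (hR : R.PosDef) {Rs : ℕ → Matrix ι ι ℝ} (h : Tendsto Rs atTop (𝓝 R)) :
    Tendsto (fun n => (Rs n)⁻¹) atTop (𝓝 R⁻¹) := by
  have hc : ContinuousAt (Inv.inv : Matrix ι ι ℝ → Matrix ι ι ℝ) R := by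
    apply continuousAt_matrix_inv
    rw [Ring.inverse_eq_inv']
    exact continuousAt_inv₀ hR.det_pos.ne'
  exact hc.tendsto.comp h

lemma tendsto_mulVec {l m : Type*} [Fintype l] [Fintype m] {A : ℕ → Matrix l m ℝ} {B : Matrix l m ℝ}
    {v : ℕ → m → ℝ} {w : m → ℝ} (hA : Tendsto A atTop (𝓝 B)) (hv : Tendsto v atTop (𝓝 w)) :
    Tendsto (fun n => (A n).mulVec (v n)) atTop (𝓝 (B.mulVec w)) := by
  have hc : Continuous (fun p : Matrix l m ℝ × (m → ℝ) => p.1.mulVec p.2) :=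
    Continuous.matrix_mulVec continuous_fst continuous_snd
  exact (hc.tendsto (B, w)).comp (hA.prodMk_nhds hv)

lemma tendsto_dot {m : Type*} [Fintype m]
    {v w : ℕ → m → ℝ} {v0 w0 : m → ℝ} (hv : Tendsto v atTop (𝓝 v0)) (hw : Tendsto w atTop (𝓝 w0)) :
    Tendsto (fun n => v n ⬝ᵥ w n) atTop (𝓝 (v0 ⬝ᵥ w0)) := by
  have hc : Continuous (fun p : (m → ℝ) × (m → ℝ) => p.1 ⬝ᵥ p.2) :=
    Continuous.dotProduct continuous_fst continuous_snd
  exact (hc.tendsto (v0, w0)).comp (hv.prodMk_nhds hw)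

lemma tendsto_mmul {l m o : Type*} [Fintype l] [Fintype m] [Fintype o] {A : ℕ → Matrix l m ℝ}
    {B : Matrix l m ℝ} {C : ℕ → Matrix m o ℝ} {D : Matrix m o ℝ}
    (hA : Tendsto A atTop (𝓝 B)) (hv : Tendsto C atTop (𝓝 D)) :
    Tendsto (fun n => A n * C n) atTop (𝓝 (B * D)) := by
  have hc : Continuous (fun p : Matrix l m ℝ × Matrix m o ℝ => p.1 * p.2) :=
    Continuous.matrix_mul continuous_fst continuous_snd
  exact (hc.tendsto (B, D)).comp (hA.prodMk_nhds hv)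

lemma tendsto_sub_matrix {l m o p : Type*} {A : ℕ → Matrix l m ℝ}
    {B : Matrix l m ℝ} (hA : Tendsto A atTop (𝓝 B)) (f : o → l) (g : p → m) :
    Tendsto (fun n => (A n).submatrix f g) atTop (𝓝 (B.submatrix f g)) :=
  ((Continuous.matrix_submatrix continuous_id f g).tendsto B).comp hA

lemma tendsto_coef (hQ : Q.PosDef) (h : Tendsto Qs atTop (𝓝 Q)) :
    Tendsto (fun n => (Qs n).toBlocks₁₁⁻¹ * (Qs n).toBlocks₁₂) atTop
      (𝓝 (Q.toBlocks₁₁⁻¹ * Q.toBlocks₁₂)) :=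
  tendsto_mmul (tendsto_matrix_inv (Q11_posDef hQ) (tendsto_sub_matrix h Sum.inl Sum.inl))
    (tendsto_sub_matrix h Sum.inl Sum.inr)

lemma tendsto_Sch (hQ : Q.PosDef) (h : Tendsto Qs atTop (𝓝 Q)) :
    Tendsto (fun n => Sch (Qs n)) atTop (𝓝 (Sch Q)) := by
  unfold Sch
  exact (tendsto_sub_matrix h Sum.inr Sum.inr).sub (tendsto_mmul
    (tendsto_mmul (tendsto_sub_matrix h Sum.inr Sum.inl)
      (tendsto_matrix_inv (Q11_posDef hQ) (tendsto_sub_matrix h Sum.inl Sum.inl)))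
    (tendsto_sub_matrix h Sum.inl Sum.inr))

lemma tendsto_det {ι : Type*} [Fintype ι] [DecidableEq ι] {R : Matrix ι ι ℝ}
    {Rs : ℕ → Matrix ι ι ℝ} (h : Tendsto Rs atTop (𝓝 R)) :
    Tendsto (fun n => (Rs n).det) atTop (𝓝 R.det) :=
  ((Continuous.matrix_det continuous_id).tendsto R).comp h

/-- The Gaussian factor common to all densities. -/
def fq1 (Q : Matrix (Fin k₁ ⊕ Fin k₂) (Fin k₁ ⊕ Fin k₂) ℝ) (σ2 : ℝ)
    (t : (Fin k₁ ⊕ Fin k₂) → ℝ) : ℝ :=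
  (2 * π * σ2) ^ (-((k₁ : ℝ) + k₂) / 2) * Real.sqrt Q.det *
    Real.exp (-((t ∘ Sum.inl + (Q.toBlocks₁₁⁻¹ * Q.toBlocks₁₂).mulVec (t ∘ Sum.inr)) ⬝ᵥ
      Q.toBlocks₁₁.mulVec
        (t ∘ Sum.inl + (Q.toBlocks₁₁⁻¹ * Q.toBlocks₁₂).mulVec (t ∘ Sum.inr))) / (2 * σ2))

lemma tendsto_fq1 (hQ : Q.PosDef) (h : Tendsto Qs atTop (𝓝 Q)) (σ2 : ℝ)
    (t : (Fin k₁ ⊕ Fin k₂) → ℝ) :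
    Tendsto (fun n => fq1 (Qs n) σ2 t) atTop (𝓝 (fq1 Q σ2 t)) := by
  unfold fq1
  have hy : Tendsto (fun n => t ∘ Sum.inl +
      ((Qs n).toBlocks₁₁⁻¹ * (Qs n).toBlocks₁₂).mulVec (t ∘ Sum.inr)) atTop
      (𝓝 (t ∘ Sum.inl + (Q.toBlocks₁₁⁻¹ * Q.toBlocks₁₂).mulVec (t ∘ Sum.inr))) :=
    tendsto_const_nhds.add (tendsto_mulVec (tendsto_coef hQ h) tendsto_const_nhds)
  have hq := tendsto_dot hy (tendsto_mulVec (tendsto_sub_matrix h Sum.inl Sum.inl) hy)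
  exact (tendsto_const_nhds.mul ((Real.continuous_sqrt.tendsto _).comp (tendsto_det h))).mul
    ((Real.continuous_exp.tendsto _).comp (hq.neg.div_const _))

lemma fq_tendsto_fin {σ2 α : ℝ} (hσ : 0 < σ2) (hα : 0 < α) (hQ : Q.PosDef)
    (h : Tendsto Qs atTop (𝓝 Q)) {γs : ℕ → Fin k₂ → ℝ} {γ : Fin k₂ → ℝ}
    (hγ : Tendsto γs atTop (𝓝 γ)) (t : (Fin k₁ ⊕ Fin k₂) → ℝ) :
    Tendsto (fun n => fq (Qs n) σ2 α (γs n) t) atTop (𝓝 (fq Q σ2 α γ t)) := by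
  have hb : 0 < σ2 / α := by positivity
  have ha := Real.exp_pos (2 * α * k₂)
  have h1 := qrad_continuous k₂ hσ hα
  have h2 := gfun_continuous ha hb
  have h3 := rho_continuous ha hb
  have hv : Tendsto (fun n => t ∘ Sum.inr + γs n) atTop (𝓝 (t ∘ Sum.inr + γ)) :=
    tendsto_const_nhds.add hγ
  have hS := tendsto_Sch hQ h
  have hr := (Real.continuous_sqrt.tendsto _).comp (tendsto_dot hv (tendsto_mulVec hS hv))
  have hx := (((h3.tendsto _).comp hr).smul hv).sub hγ
  have hxx := tendsto_dot hx (tendsto_mulVec hS hx)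
  exact ((tendsto_fq1 hQ h σ2 t).mul (((h1.comp h2).tendsto _).comp hr)).mul
    ((Real.continuous_exp.tendsto _).comp (hxx.neg.div_const _))

lemma trace_bound {ι : Type*} [Fintype ι] [DecidableEq ι] {R : Matrix ι ι ℝ} (hR : R.PosDef)
    (x : ι → ℝ) : enorm2 x ^ 2 ≤ R⁻¹.trace * (x ⬝ᵥ R.mulVec x) := by
  have hs := msqrt_spec hR.posSemidef
  set T := msqrt R
  have hu : IsUnit T.det := (msqrt_det_ne hR).isUnit
  rw [← enorm2_mulVec T R (by rw [hs.1, hs.2]), ← msqrt_inv_sq hR]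
  have hx : x = T⁻¹.mulVec (T.mulVec x) := by
    rw [Matrix.mulVec_mulVec, Matrix.nonsing_inv_mul _ hu, Matrix.one_mulVec]
  conv_lhs => rw [hx]
  generalize T.mulVec x = y
  have htr : (T⁻¹ * T⁻¹).trace = ∑ i, ∑ j, (T⁻¹ i j) ^ 2 := by
    conv_lhs => arg 1; arg 2; rw [← msqrt_inv_symm hR]
    simp [Matrix.trace, Matrix.mul_apply, sq, T]
  rw [htr, enorm2_sq, enorm2_sq, Finset.sum_mul]
  apply Finset.sum_le_sum
  intro i _
  exact Finset.sum_mul_sq_le_sq_mul_sq _ _ _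

lemma tendsto_mul_exp_sq {b : ℝ} (hb : 0 < b) :
    Tendsto (fun G : ℝ => G * Real.exp (-G ^ 2 / b)) atTop (𝓝 0) := by
  have hu : Tendsto (fun G : ℝ => G ^ 2 / b) atTop atTop :=
    (tendsto_pow_atTop two_ne_zero).atTop_div_const hb
  have h := ((Real.tendsto_pow_mul_exp_neg_atTop_nhds_zero 1).comp hu).const_mul b
  rw [mul_zero] at h
  refine squeeze_zero' ?_ ?_ h
  · filter_upwards [eventually_ge_atTop 0] with G hG
    positivity
  · filter_upwards [eventually_ge_atTop 1] with G hG
    have h1 : G ≤ G ^ 2 := by nlinarith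
    have h2 : b * (G ^ 2 / b) = G ^ 2 := by field_simp
    simp only [Function.comp, pow_one]
    rw [← mul_assoc, h2, ← neg_div]
    gcongr

lemma qrad_tendsto (k₂ : ℕ) {σ2 α : ℝ} (hσ : 0 < σ2) (hα : 0 < α) :
    Tendsto (qrad k₂ σ2 α) atTop (𝓝 1) := by
  have hu : Tendsto (fun G : ℝ => (α / σ2) * G ^ 2) atTop atTop :=
    (tendsto_pow_atTop two_ne_zero).const_mul_atTop (by positivity)
  have h1 : Tendsto (fun G : ℝ => Real.exp (-(α / σ2) * G ^ 2 + 2 * α * k₂)) atTop (𝓝 0) := by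
    apply Real.tendsto_exp_atBot.comp
    apply tendsto_atBot_add_const_right
    exact (tendsto_neg_atTop_atBot.comp hu).congr fun G => (neg_mul _ _).symm
  have h2 : Tendsto (fun G : ℝ => (2 * α / σ2) * G ^ 2 *
      (1 + Real.exp ((α / σ2) * G ^ 2 - 2 * α * k₂))⁻¹) atTop (𝓝 0) := by
    have h := ((Real.tendsto_pow_mul_exp_neg_atTop_nhds_zero 1).comp hu).const_mul
      (2 * Real.exp (2 * α * k₂))
    rw [mul_zero] at h
    refine squeeze_zero ?_ ?_ h
    · intro G; positivity
    · intro G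
      simp only [Function.comp, pow_one]
      have e : (1 + Real.exp ((α / σ2) * G ^ 2 - 2 * α * k₂))⁻¹ ≤
          Real.exp (2 * α * k₂) * Real.exp (-((α / σ2) * G ^ 2)) := by
        rw [← Real.exp_add]
        have : 2 * α * k₂ + -((α / σ2) * G ^ 2) = -((α / σ2) * G ^ 2 - 2 * α * k₂) := by ring
        rw [this, Real.exp_neg]
        gcongr
        linarith
      calc _ ≤ (2 * α / σ2) * G ^ 2 * (Real.exp (2 * α * k₂) * Real.exp (-((α / σ2) * G ^ 2))) := by
            gcongr
        _ = _ := by ring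
  have h3 := ((h1.const_add 1).pow k₂).mul ((h2.const_add 1).inv₀ (by norm_num))
  have e : (1 + (0 : ℝ)) ^ k₂ * (1 + 0)⁻¹ = 1 := by simp
  rw [e] at h3
  exact h3

lemma enorm2_sq_add_le {ι : Type*} [Fintype ι] (x y : ι → ℝ) :
    enorm2 y ^ 2 ≤ 2 * enorm2 (x + y) ^ 2 + 2 * enorm2 x ^ 2 := by
  simp only [enorm2_sq, Finset.mul_sum, ← Finset.sum_add_distrib, Pi.add_apply]
  apply Finset.sum_le_sum
  intro i _
  nlinarith [sq_nonneg (2 * x i + y i)]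

lemma abs_le_enorm2 {ι : Type*} [Fintype ι] (x : ι → ℝ) (i : ι) : |x i| ≤ enorm2 x := by
  apply Real.abs_le_sqrt
  exact Finset.single_le_sum (f := fun i => x i ^ 2) (fun i _ => sq_nonneg _) (Finset.mem_univ i)

lemma fq_tendsto_inf {σ2 α : ℝ} (hσ : 0 < σ2) (hα : 0 < α) (hQ : Q.PosDef)
    (h : Tendsto Qs atTop (𝓝 Q)) (hQs : ∀ᶠ n in atTop, (Qs n).PosDef) {γs : ℕ → Fin k₂ → ℝ}
    (hγ : Tendsto (fun n => enorm2 (γs n)) atTop atTop) (t : (Fin k₁ ⊕ Fin k₂) → ℝ) :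
    Tendsto (fun n => fq (Qs n) σ2 α (γs n) t) atTop (𝓝 (gaussCovDens σ2 Q t)) := by
  have hb : 0 < σ2 / α := by positivity
  have ha := Real.exp_pos (2 * α * k₂)
  set a := Real.exp (2 * α * k₂)
  set b := σ2 / α
  have hS := tendsto_Sch hQ h
  set t2 := t ∘ Sum.inr with ht2
  let v : ℕ → Fin k₂ → ℝ := fun n => t2 + γs n
  let r : ℕ → ℝ := fun n => Real.sqrt (v n ⬝ᵥ (Sch (Qs n)).mulVec (v n))
  -- lower bound
  have htr : Tendsto (fun n => (Sch (Qs n))⁻¹.trace) atTop (𝓝 (Sch Q)⁻¹.trace) :=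
    ((Continuous.matrix_trace continuous_id).tendsto _).comp
      (tendsto_matrix_inv (Sch_posDef hQ) hS)
  set K := |(Sch Q)⁻¹.trace| + 1 with hK
  have hK0 : 0 < K := by positivity
  have hKe : ∀ᶠ n in atTop, (Sch (Qs n))⁻¹.trace ≤ K :=
    (htr.eventually (gt_mem_nhds (lt_of_le_of_lt (le_abs_self _) (lt_add_one _)))).mono
      fun n hn => hn.le
  have hvr : ∀ᶠ n in atTop, enorm2 (v n) ^ 2 ≤ K * r n ^ 2 := by
    filter_upwards [hKe, hQs] with n hn hq
    have hp := Sch_posDef hq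
    have hnn : 0 ≤ v n ⬝ᵥ (Sch (Qs n)).mulVec (v n) := by
      have := hp.posSemidef.dotProduct_mulVec_nonneg (v n)
      simpa using this
    have h1 := trace_bound hp (v n)
    simp only [r]
    rw [Real.sq_sqrt hnn]
    exact h1.trans (by gcongr)
  have hr2 : Tendsto (fun n => r n ^ 2) atTop atTop := by
    have h1 : Tendsto (fun n => (enorm2 (γs n) ^ 2 - 2 * enorm2 t2 ^ 2) / (2 * K)) atTop atTop := by
      apply Tendsto.atTop_div_const (by positivity)
      apply tendsto_atTop_add_const_right
      exact (tendsto_pow_atTop two_ne_zero).comp hγ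
    refine tendsto_atTop_mono' _ ?_ h1
    filter_upwards [hvr] with n hn
    have := enorm2_sq_add_le t2 (γs n)
    rw [div_le_iff₀ (by positivity)]
    simp only [v] at hn
    linarith
  have hr : Tendsto r atTop atTop := by
    have h1 := Real.tendsto_sqrt_atTop.comp hr2
    refine h1.congr fun n => ?_
    simp only [Function.comp]
    exact Real.sqrt_sq (Real.sqrt_nonneg _)
  have hg : Tendsto (fun n => gfun a b (r n)) atTop atTop :=
    tendsto_atTop_mono (fun n => le_gfun ha hb (Real.sqrt_nonneg _)) hr
  have hx : Tendsto (fun n => rho a b (r n) • v n - γs n) atTop (𝓝 t2) := by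
    rw [tendsto_pi_nhds]
    intro i
    have h0 : Tendsto (fun n => (a * Real.exp (-(gfun a b (r n)) ^ 2 / b)) * v n i) atTop (𝓝 0) := by
      have h1 := ((tendsto_mul_exp_sq hb).comp hg).const_mul (a * Real.sqrt K)
      rw [mul_zero] at h1
      refine squeeze_zero_norm' ?_ h1
      filter_upwards [hvr] with n hn
      have h2 : |v n i| ≤ Real.sqrt K * gfun a b (r n) := by
        calc |v n i| ≤ enorm2 (v n) := abs_le_enorm2 _ _
          _ ≤ Real.sqrt (K * r n ^ 2) := Real.le_sqrt_of_sq_le hn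
          _ = Real.sqrt K * r n := by
            rw [Real.sqrt_mul hK0.le, Real.sqrt_sq (Real.sqrt_nonneg _)]
          _ ≤ _ := by
            gcongr
            exact le_gfun ha hb (Real.sqrt_nonneg _)
      rw [Real.norm_eq_abs, abs_mul, abs_of_pos (by positivity)]
      calc _ ≤ a * Real.exp (-(gfun a b (r n)) ^ 2 / b) * (Real.sqrt K * gfun a b (r n)) := by
            gcongr
        _ = _ := by simp only [Function.comp]; ring
    have h3 := h0.const_add (t2 i)
    rw [add_zero] at h3
    refine h3.congr fun n => ?_
    simp only [Pi.sub_apply, Pi.smul_apply, smul_eq_mul, v, rho, Pi.add_apply]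
    ring
  have hxx := tendsto_dot hx (tendsto_mulVec hS hx)
  have hfin := ((tendsto_fq1 hQ h σ2 t).mul ((qrad_tendsto k₂ hσ hα).comp hg)).mul
    ((Real.continuous_exp.tendsto _).comp (hxx.neg.div_const (2 * σ2)))
  have e : gaussCovDens σ2 Q t =
      fq1 Q σ2 t * 1 * Real.exp (-(t2 ⬝ᵥ (Sch Q).mulVec t2) / (2 * σ2)) := by
    unfold gaussCovDens fq1
    rw [quad_decomp hQ t, mul_one, mul_assoc _ (Real.exp _) (Real.exp _), ← Real.exp_add]
    congr 2
    · simp [Fintype.card_sum]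
    · rw [← ht2]; ring
  rw [e]
  exact hfin

end ptw

section scheffe

lemma integrable_of_dens {E : Type*} [MeasurableSpace E] {μ : Measure E} {f : E → ℝ}
    (hf : Measurable f) (h0 : ∀ t, 0 ≤ f t)
    (h1 : (μ.withDensity fun t => ENNReal.ofReal (f t)) Set.univ = 1) :
    Integrable f μ ∧ ∫ t, f t ∂μ = 1 := by
  rw [withDensity_apply _ MeasurableSet.univ, Measure.restrict_univ] at h1
  constructor
  · refine ⟨hf.aestronglyMeasurable, ?_⟩
    rw [hasFiniteIntegral_iff_ofReal (ae_of_all _ h0), h1]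
    exact one_lt_top
  · rw [integral_eq_lintegral_of_nonneg_ae (ae_of_all _ h0) hf.aestronglyMeasurable, h1,
      ENNReal.toReal_one]

lemma scheffe_tv {E : Type*} [MeasurableSpace E] {μ : Measure E} {f : ℕ → E → ℝ} {f0 : E → ℝ}
    {ν : ℕ → Measure E} {ν0 : Measure E} (hf0 : Measurable f0) (h0 : ∀ t, 0 ≤ f0 t)
    (hν0 : ν0 = μ.withDensity fun t => ENNReal.ofReal (f0 t)) (h1 : ν0 Set.univ = 1)
    (hf : ∀ᶠ n in atTop, Measurable (f n) ∧ (∀ t, 0 ≤ f n t) ∧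
      ν n = (μ.withDensity fun t => ENNReal.ofReal (f n t)) ∧ ν n Set.univ = 1)
    (hpt : ∀ t, Tendsto (fun n => f n t) atTop (𝓝 (f0 t))) :
    Tendsto (fun n => ∫ t, |f n t - f0 t| ∂μ) atTop (𝓝 0) ∧
    Tendsto (fun n => ⨆ s : Set E, ⨆ (_ : MeasurableSet s), |(ν n s).toReal - (ν0 s).toReal|)
      atTop (𝓝 0) := by
  obtain ⟨hi0, hI0⟩ := integrable_of_dens hf0 h0 (by rw [← hν0]; exact h1)
  have hpos : Tendsto (fun n => ∫ t, max (f0 t - f n t) 0 ∂μ) atTop (𝓝 0) := by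
    have := tendsto_integral_filter_of_dominated_convergence (μ := μ) (l := atTop)
      (F := fun n t => max (f0 t - f n t) 0) (f := fun _ => (0 : ℝ)) f0 ?_ ?_ hi0 ?_
    · simpa using this
    · filter_upwards [hf] with n hn
      exact ((hf0.sub hn.1).max measurable_const).aestronglyMeasurable
    · filter_upwards [hf] with n hn
      refine ae_of_all _ fun t => ?_
      rw [Real.norm_eq_abs, abs_of_nonneg (le_max_right _ _)]
      exact max_le (by linarith [hn.2.1 t]) (h0 t)
    · refine ae_of_all _ fun t => ?_
      have := ((hpt t).const_sub (f0 t)).max (tendsto_const_nhds (x := (0 : ℝ)))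
      simpa using this
  have hL1 : Tendsto (fun n => ∫ t, |f n t - f0 t| ∂μ) atTop (𝓝 0) := by
    have h2 := hpos.const_mul 2
    rw [mul_zero] at h2
    refine h2.congr' ?_
    filter_upwards [hf] with n hn
    obtain ⟨hi, hI⟩ := integrable_of_dens hn.1 hn.2.1 (by rw [← hn.2.2.1]; exact hn.2.2.2)
    have hmax : Integrable (fun t => max (f0 t - f n t) 0) μ := (hi0.sub hi).pos_part
    have e : (fun t => |f n t - f0 t|) =
        fun t => (f n t - f0 t) + 2 * max (f0 t - f n t) 0 := by
      funext t
      rcases le_total (f n t) (f0 t) with hh | hh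
      · rw [abs_of_nonpos (by linarith), max_eq_left (by linarith)]; ring
      · rw [abs_of_nonneg (by linarith), max_eq_right (by linarith)]; ring
    have hd : Integrable (fun t => f n t - f0 t) μ := hi.sub hi0
    rw [e, integral_add hd (hmax.const_mul 2), integral_sub hi hi0, hI, hI0,
      integral_const_mul]
    ring
  refine ⟨hL1, ?_⟩
  refine squeeze_zero' (Eventually.of_forall fun n => ?_) ?_ hL1
  · exact Real.iSup_nonneg fun s => Real.iSup_nonneg fun _ => abs_nonneg _
  · filter_upwards [hf] with n hn
    obtain ⟨hi, hI⟩ := integrable_of_dens hn.1 hn.2.1 (by rw [← hn.2.2.1]; exact hn.2.2.2)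
    have hnn : 0 ≤ ∫ t, |f n t - f0 t| ∂μ := integral_nonneg fun t => abs_nonneg _
    refine Real.iSup_le (fun s => Real.iSup_le (fun hs => ?_) hnn) hnn
    have key : ∀ g : E → ℝ, Measurable g → (∀ t, 0 ≤ g t) →
        ((μ.withDensity fun t => ENNReal.ofReal (g t)) s).toReal = ∫ t in s, g t ∂μ := by
      intro g hg hg0
      rw [withDensity_apply _ hs, integral_eq_lintegral_of_nonneg_ae (ae_of_all _ hg0)
        hg.aestronglyMeasurable]
    rw [hn.2.2.1, hν0, key _ hn.1 hn.2.1, key _ hf0 h0,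
      ← integral_sub hi.integrableOn hi0.integrableOn]
    refine (abs_integral_le_integral_abs).trans ?_
    exact setIntegral_le_integral (hi.sub hi0).abs (ae_of_all _ fun t => abs_nonneg _)

variable {k₁ k₂ : ℕ}

lemma fq_measurable (Q : Matrix (Fin k₁ ⊕ Fin k₂) (Fin k₁ ⊕ Fin k₂) ℝ) {σ2 α : ℝ} (hσ : 0 < σ2)
    (hα : 0 < α) (γ : Fin k₂ → ℝ) : Measurable (fq Q σ2 α γ) := by
  have hb : 0 < σ2 / α := by positivity
  have ha := Real.exp_pos (2 * α * k₂)
  have h1 := qrad_continuous k₂ hσ hα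
  have h2 := gfun_continuous ha hb
  have h3 := rho_continuous ha hb
  have hl : Continuous (fun t : Fin k₁ ⊕ Fin k₂ → ℝ => t ∘ Sum.inl) := by
    unfold Function.comp; fun_prop
  have hr : Continuous (fun t : Fin k₁ ⊕ Fin k₂ → ℝ => t ∘ Sum.inr) := by
    unfold Function.comp; fun_prop
  have hy : Continuous (fun t : Fin k₁ ⊕ Fin k₂ → ℝ =>
      t ∘ Sum.inl + (Q.toBlocks₁₁⁻¹ * Q.toBlocks₁₂).mulVec (t ∘ Sum.inr)) :=
    hl.add (Continuous.matrix_mulVec continuous_const hr)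
  have hyy := hy.dotProduct (Continuous.matrix_mulVec (continuous_const (y := Q.toBlocks₁₁)) hy)
  have hv : Continuous (fun t : Fin k₁ ⊕ Fin k₂ → ℝ => t ∘ Sum.inr + γ) := hr.add continuous_const
  have hrr := Real.continuous_sqrt.comp
    (hv.dotProduct (Continuous.matrix_mulVec (continuous_const (y := Sch Q)) hv))
  have hx := ((h3.comp hrr).smul hv).sub (continuous_const (y := γ))
  have hxx := hx.dotProduct (Continuous.matrix_mulVec (continuous_const (y := Sch Q)) hx)
  apply Continuous.measurable
  exact ((continuous_const.mul (Real.continuous_exp.comp (hyy.neg.div_const (2 * σ2)))).mul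
    ((h1.comp h2).comp hrr)).mul (Real.continuous_exp.comp (hxx.neg.div_const (2 * σ2)))

lemma fq_nonneg (Q : Matrix (Fin k₁ ⊕ Fin k₂) (Fin k₁ ⊕ Fin k₂) ℝ) {σ2 α : ℝ} (hσ : 0 < σ2)
    (hα : 0 < α) (γ : Fin k₂ → ℝ) (t : Fin k₁ ⊕ Fin k₂ → ℝ) : 0 ≤ fq Q σ2 α γ t := by
  have := qrad_nonneg k₂ hσ hα
  unfold fq
  refine mul_nonneg (mul_nonneg (by positivity) (this _)) (by positivity)

lemma gaussCovDens_measurable {κ : Type*} [Fintype κ] [DecidableEq κ] (R : Matrix κ κ ℝ) (σ2 : ℝ) :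
    Measurable (gaussCovDens σ2 R) := by
  apply Continuous.measurable
  have hxx : Continuous (fun x : κ → ℝ => x ⬝ᵥ R.mulVec x) :=
    continuous_id.dotProduct (Continuous.matrix_mulVec continuous_const continuous_id)
  unfold gaussCovDens
  fun_prop

theorem main_tv {k₁ k₂ : ℕ} (hk₁ : 0 < k₁)
    (X : ∀ n : ℕ, Matrix (Fin n) (Fin k₁ ⊕ Fin k₂) ℝ)
    (hX : ∀ n, k₁ + k₂ ≤ n → (X n).rank = k₁ + k₂)
    (σ α : ℝ) (hσ : 0 < σ) (hα : 0 < α)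
    (β : ∀ _ : ℕ, (Fin k₁ ⊕ Fin k₂) → ℝ) :
    ∀ᶠ n in atTop, Measurable (fdens (X n) (β n) (σ ^ 2) α) ∧
      (∀ t, 0 ≤ fdens (X n) (β n) (σ ^ 2) α t) ∧
      (Pmeas (X n) (β n) (σ ^ 2)).map
        (fun Y => Real.sqrt n • (mavg α (σ ^ 2) (X n) Y - β n)) =
        (volume.withDensity fun t => ENNReal.ofReal (fdens (X n) (β n) (σ ^ 2) α t)) ∧
      ((Pmeas (X n) (β n) (σ ^ 2)).map
        (fun Y => Real.sqrt n • (mavg α (σ ^ 2) (X n) Y - β n))) Set.univ = 1 := by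
  have hσ2 : 0 < σ ^ 2 := by positivity
  filter_upwards [eventually_ge_atTop (k₁ + k₂)] with n hn
  have hn0 : 0 < n := by omega
  have hr := hX n hn
  have e : fdens (X n) (β n) (σ ^ 2) α =
      fq (Qn (X n)) (σ ^ 2) α (Real.sqrt n • (β n ∘ Sum.inr)) :=
    funext fun t => fdens_eq_fq hn0 hr hσ2 hα _ t
  rw [finite_law hn0 hr hσ, e]
  refine ⟨fq_measurable _ hσ2 hα _, fq_nonneg _ hσ2 hα _,
    limitLaw_density (Qn_posDef hn0 hr) hσ hα _, ?_⟩
  have := limitLaw_prob (α := α) (Qn (X n)) hσ (Real.sqrt n • (β n ∘ Sum.inr))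
  exact measure_univ

end scheffe

/-- if `√n β₂⁽ⁿ⁾ → γ` (resp. `‖√n β₂⁽ⁿ⁾‖ → ∞`), the finite-sample densities
`f_{n,β⁽ⁿ⁾,σ}` of `√n(β̃ − β⁽ⁿ⁾)` converge in `L¹` to `f_{∞,γ}` (resp. to the `N(0, σ²Q⁻¹)`
density); consequently the distributions converge in total variation distance. -/
theorem statement9 {k₁ k₂ : ℕ} (hk₁ : 0 < k₁) (hk₂ : 0 < k₂)
    (X : ∀ n : ℕ, Matrix (Fin n) (Fin k₁ ⊕ Fin k₂) ℝ)
    (hX : ∀ n, k₁ + k₂ ≤ n → (X n).rank = k₁ + k₂)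
    (Q : Matrix (Fin k₁ ⊕ Fin k₂) (Fin k₁ ⊕ Fin k₂) ℝ) (hQ : Q.PosDef)
    (hlim : Tendsto (fun n : ℕ => (n : ℝ)⁻¹ • ((X n)ᵀ * X n)) atTop (𝓝 Q))
    (σ α : ℝ) (hσ : 0 < σ) (hα : 0 < α)
    (β : ∀ _ : ℕ, (Fin k₁ ⊕ Fin k₂) → ℝ) :
    (∀ γ : Fin k₂ → ℝ, Tendsto (fun n : ℕ => Real.sqrt n • (β n ∘ Sum.inr)) atTop (𝓝 γ) →
      Tendsto (fun n : ℕ =>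
          ∫ t, |fdens (X n) (β n) (σ ^ 2) α t - fInfty Q (σ ^ 2) α γ t| ∂volume)
        atTop (𝓝 (0 : ℝ)) ∧
      Tendsto (fun n : ℕ => ⨆ s : Set ((Fin k₁ ⊕ Fin k₂) → ℝ), ⨆ (_ : MeasurableSet s),
          |(((Pmeas (X n) (β n) (σ ^ 2)).map
              (fun Y => Real.sqrt n • (mavg α (σ ^ 2) (X n) Y - β n))) s).toReal -
            ((limitLaw Q (σ ^ 2) α γ) s).toReal|)
        atTop (𝓝 (0 : ℝ))) ∧
    (Tendsto (fun n : ℕ => enorm2 (Real.sqrt n • (β n ∘ Sum.inr))) atTop atTop →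
      Tendsto (fun n : ℕ =>
          ∫ t, |fdens (X n) (β n) (σ ^ 2) α t - gaussCovDens (σ ^ 2) Q t| ∂volume)
        atTop (𝓝 (0 : ℝ)) ∧
      Tendsto (fun n : ℕ => ⨆ s : Set ((Fin k₁ ⊕ Fin k₂) → ℝ), ⨆ (_ : MeasurableSet s),
          |(((Pmeas (X n) (β n) (σ ^ 2)).map
              (fun Y => Real.sqrt n • (mavg α (σ ^ 2) (X n) Y - β n))) s).toReal -
            ((gaussCov (σ ^ 2) Q) s).toReal|)
        atTop (𝓝 (0 : ℝ))) := by
  have hσ2 : 0 < σ ^ 2 := by positivity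
  have hev := main_tv hk₁ X hX σ α hσ hα β
  have hfeq : ∀ t, ∀ᶠ n in atTop,
      fq (Qn (X n)) (σ ^ 2) α (Real.sqrt n • (β n ∘ Sum.inr)) t =
        fdens (X n) (β n) (σ ^ 2) α t := by
    intro t
    filter_upwards [eventually_ge_atTop (k₁ + k₂)] with n hn
    exact (fdens_eq_fq (by omega) (hX n hn) hσ2 hα _ t).symm
  have hQs : ∀ᶠ n in atTop, (Qn (X n)).PosDef := by
    filter_upwards [eventually_ge_atTop (k₁ + k₂)] with n hn
    exact Qn_posDef (by omega) (hX n hn)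
  have hl : Tendsto (fun n => Qn (X n)) atTop (𝓝 Q) := hlim
  constructor
  · intro γ hγ
    have e : fInfty Q (σ ^ 2) α γ = fq Q (σ ^ 2) α γ :=
      funext fun t => fInfty_eq_fq hQ hσ2 hα γ t
    rw [e]
    have := limitLaw_prob (α := α) Q hσ γ
    exact scheffe_tv (fq_measurable Q hσ2 hα γ) (fq_nonneg Q hσ2 hα γ)
      (limitLaw_density hQ hσ hα γ) measure_univ hev
      (fun t => (fq_tendsto_fin hσ2 hα hQ hl hγ t).congr' (hfeq t))
  · intro hγ
    refine scheffe_tv (gaussCovDens_measurable Q (σ ^ 2)) (fun t => ?_) rfl (gaussCov_univ hQ hσ) hev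
      (fun t => (fq_tendsto_inf hσ2 hα hQ hl hQs hγ t).congr' (hfeq t))
    unfold gaussCovDens
    positivity


end
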